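/- Let K belong to the class R and let u be a non-singular vertex of K. If lk(u,K) contains the boundary complex of a 2-simplex abc as a subcomplex, then lk(u,K) contains the 2-simplex abc as well. Consequently, for any vertex v ∈ lk(u,K), the disc lk(u,K) − st(v, lk(u,K)) contains no diagonal, i.e., no interior edge connecting two of its boundary vertices. -/

import Mathlib

/-- An abstract simplicial complex on vertex set `ℕ`: a finite, downward closed
collection of nonempty finite sets of vertices. -/
structure SComplex where
  faces : Finset (Finset ℕ)
  not_empty_mem : ∅ ∉ faces
  down_closed : ∀ s ∈ faces, ∀ t ⊆ s, t ≠ ∅ → t ∈ faces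

namespace SComplex

/-- The set of vertices of the complex. -/
def vertexSet (K : SComplex) : Finset ℕ := K.faces.sup id

/-- `fnum K i` is the number of `i`-dimensional faces of `K`. -/
def fnum (K : SComplex) (i : ℕ) : ℕ := (K.faces.filter fun s => s.card = i + 1).card

/-- `g₂` for a 3-dimensional complex: `f₁ - 4 f₀ + 10`. -/
def g2 (K : SComplex) : ℤ := (K.fnum 1 : ℤ) - 4 * (K.fnum 0 : ℤ) + 10

/-- `g₂` for a 2-dimensional complex: `f₁ - 3 f₀ + 6`. -/
def g2surf (K : SComplex) : ℤ := (K.fnum 1 : ℤ) - 3 * (K.fnum 0 : ℤ) + 6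

/-- Euler characteristic of a (2-dimensional) complex. -/
def euler (K : SComplex) : ℤ := (K.fnum 0 : ℤ) - (K.fnum 1 : ℤ) + (K.fnum 2 : ℤ)

/-- The link of a face `σ`. -/
def lk (K : SComplex) (σ : Finset ℕ) : SComplex where
  faces := K.faces.filter fun γ => γ ∩ σ = ∅ ∧ γ ∪ σ ∈ K.faces
  not_empty_mem := fun h => K.not_empty_mem (Finset.mem_filter.mp h).1
  down_closed := by
    intro s hs t hts ht
    rw [Finset.mem_filter] at hs ⊢
    refine ⟨K.down_closed s hs.1 t hts ht, ?_, ?_⟩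
    · have h1 : t ∩ σ ⊆ s ∩ σ := Finset.inter_subset_inter hts (Finset.Subset.refl σ)
      rw [hs.2.1] at h1
      exact Finset.subset_empty.mp h1
    · refine K.down_closed (s ∪ σ) hs.2.2 (t ∪ σ)
        (Finset.union_subset_union hts (Finset.Subset.refl σ)) ?_
      intro hc
      exact ht (Finset.union_eq_empty.mp hc).1

/-- The (closed) star of a face `σ`. -/
def st (K : SComplex) (σ : Finset ℕ) : SComplex where
  faces := K.faces.filter fun α => α ∪ σ ∈ K.faces
  not_empty_mem := fun h => K.not_empty_mem (Finset.mem_filter.mp h).1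
  down_closed := by
    intro s hs t hts ht
    rw [Finset.mem_filter] at hs ⊢
    refine ⟨K.down_closed s hs.1 t hts ht, ?_⟩
    refine K.down_closed (s ∪ σ) hs.2 (t ∪ σ)
      (Finset.union_subset_union hts (Finset.Subset.refl σ)) ?_
    intro hc
    exact ht (Finset.union_eq_empty.mp hc).1

/-- A facet is a maximal face. -/
def IsFacet (K : SComplex) (s : Finset ℕ) : Prop :=
  s ∈ K.faces ∧ ∀ t ∈ K.faces, s ⊆ t → s = t

/-- A pure `d`-dimensional complex: all facets have `d+1` vertices. -/
def IsPure (K : SComplex) (d : ℕ) : Prop :=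
  K.faces.Nonempty ∧ ∀ s, K.IsFacet s → s.card = d + 1

/-- Two facets are adjacent if they share a codimension-one face. -/
def FacetAdj (K : SComplex) (s t : Finset ℕ) : Prop :=
  K.IsFacet s ∧ K.IsFacet t ∧ (s ∩ t).card + 1 = s.card

/-- Strong connectedness: any two facets are joined by a chain of facets, consecutive
ones sharing a codimension-one face. -/
def StronglyConnected (K : SComplex) : Prop :=
  ∀ s t, K.IsFacet s → K.IsFacet t → Relation.ReflTransGen K.FacetAdj s t

/-- Two vertices are adjacent if they span an edge. -/
def VertAdj (K : SComplex) (u v : ℕ) : Prop := ({u, v} : Finset ℕ) ∈ K.faces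

/-- Connectedness of a complex (via its 1-skeleton). -/
def Conn (K : SComplex) : Prop :=
  K.faces.Nonempty ∧
    ∀ u v, {u} ∈ K.faces → {v} ∈ K.faces → Relation.ReflTransGen K.VertAdj u v

/-- A normal `d`-pseudomanifold: pure, strongly connected, every `(d-1)`-face is in
exactly two facets, and links of faces of dimension at most `d-2` are connected. -/
def IsNormalPseudomanifold (K : SComplex) (d : ℕ) : Prop :=
  K.IsPure d ∧ K.StronglyConnected ∧
    (∀ s ∈ K.faces, s.card = d →
      (K.faces.filter fun F => F.card = d + 1 ∧ s ⊆ F).card = 2) ∧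
    (∀ s ∈ K.faces, s.card ≤ d - 1 → (K.lk s).Conn)

/-- The geometric realization `|K|`, as a subspace of `ℕ → ℝ`. -/
def realSpace (K : SComplex) : Set (ℕ → ℝ) :=
  {w | (∀ v, 0 ≤ w v) ∧ ∃ s ∈ K.faces, (∀ v, w v ≠ 0 → v ∈ s) ∧ ∑ v ∈ s, w v = 1}

/-- The link of the vertex `v` triangulates the `(d-1)`-sphere. -/
def HasSphereLink (K : SComplex) (d : ℕ) (v : ℕ) : Prop :=
  Nonempty (↥((K.lk {v}).realSpace) ≃ₜ
    ↥(Metric.sphere (0 : EuclideanSpace ℝ (Fin d)) 1))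

/-- A singular vertex of a normal 3-pseudomanifold: its link is not a 2-sphere. -/
def IsSingular (K : SComplex) (v : ℕ) : Prop :=
  {v} ∈ K.faces ∧ ¬ K.HasSphereLink 3 v

/-- `d(σ)`: the number of vertices of the link of `σ`. -/
def deg (K : SComplex) (σ : Finset ℕ) : ℕ := (K.lk σ).fnum 0

/-- The boundary complex of the simplex on vertex set `s`: all nonempty proper subsets. -/
def properFaces (s : Finset ℕ) : Finset (Finset ℕ) :=
  s.powerset.filter fun t => t ≠ ∅ ∧ t ≠ s

/-- All nonempty faces of the simplex on vertex set `s`. -/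
def simplexFaces (s : Finset ℕ) : Finset (Finset ℕ) :=
  s.powerset.filter fun t => t ≠ ∅

/-- Operation (A): a bistellar 2-move on an edge `uv` with `lk(uv) = ∂(abc)`, `abc ∉ K`. -/
def BistellarTwoMove (K K' : SComplex) : Prop :=
  ∃ u v a b c : ℕ,
    ({u, v} : Finset ℕ) ∈ K.faces ∧ u ≠ v ∧
    ({a, b, c} : Finset ℕ).card = 3 ∧
    u ∉ ({a, b, c} : Finset ℕ) ∧ v ∉ ({a, b, c} : Finset ℕ) ∧
    (K.lk {u, v}).faces = properFaces {a, b, c} ∧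
    ({a, b, c} : Finset ℕ) ∉ K.faces ∧
    K'.faces = ((K.faces.filter fun α => ¬ ({u, v} : Finset ℕ) ⊆ α) ∪
      simplexFaces (insert u {a, b, c})) ∪ simplexFaces (insert v {a, b, c})

/-- The faces of the boundary complex of a pure `d`-dimensional complex with face set `F`:
faces contained in some `(d-1)`-face lying in exactly one facet. -/
def bdryFaces (F : Finset (Finset ℕ)) (d : ℕ) : Finset (Finset ℕ) :=
  F.filter fun s => ∃ r ∈ F, s ⊆ r ∧ r.card = d ∧
    (F.filter fun t => t.card = d + 1 ∧ r ⊆ t).card = 1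

/-- The faces of the cone with apex `w` over the complex with face set `F`. -/
def coneFaces (w : ℕ) (F : Finset (Finset ℕ)) : Finset (Finset ℕ) :=
  (F ∪ F.image (insert w)) ∪ {{w}}

/-- `K₁` is obtained from the normal `d`-pseudomanifold `K` by contracting the
edge `uv` (satisfying the link condition): delete all faces containing `u` or `v`
and cone off the boundary of the result with a new vertex `w`. -/
def EdgeContractionAt (d : ℕ) (K : SComplex) (u v : ℕ) (K₁ : SComplex) : Prop :=
  ({u, v} : Finset ℕ) ∈ K.faces ∧ u ≠ v ∧
  (K.lk {u}).faces ∩ (K.lk {v}).faces = (K.lk {u, v}).faces ∧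
  ∃ w, w ∉ K.vertexSet ∧
    K₁.faces = (K.faces.filter fun α => u ∉ α ∧ v ∉ α) ∪
      coneFaces w (bdryFaces (K.faces.filter fun α => u ∉ α ∧ v ∉ α) d)

/-- Operation (B): an edge contraction in a 3-dimensional complex. -/
def EdgeContraction (K K₁ : SComplex) : Prop := ∃ u v, EdgeContractionAt 3 K u v K₁

/-- The class `R`: normal 3-pseudomanifolds with one or two singular vertices such that
(i) if `K` contains the boundary of a 3-simplex then it contains the 3-simplex and
(ii) no normal 3-pseudomanifold with smaller `g₂` is obtained from `K` by a
bistellar 2-move, an edge contraction, an edge expansion followed by a bistellar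
2-move, or an edge expansion followed by an edge contraction. -/
def InClassR (K : SComplex) : Prop :=
  K.IsNormalPseudomanifold 3 ∧
  1 ≤ {v | K.IsSingular v}.ncard ∧ {v | K.IsSingular v}.ncard ≤ 2 ∧
  (∀ s : Finset ℕ, s.card = 4 → (∀ t ∈ properFaces s, t ∈ K.faces) → s ∈ K.faces) ∧
  (∀ K' : SComplex, K'.IsNormalPseudomanifold 3 →
    (BistellarTwoMove K K' ∨ EdgeContraction K K' ∨
      (∃ M, EdgeContraction M K ∧ BistellarTwoMove M K') ∨
      (∃ M, EdgeContraction M K ∧ EdgeContraction M K')) →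
    K.g2 ≤ K'.g2)




/-- triviality of a ZMod 2 Cech cocycle on a set -/
def Good {ι Y : Type*} [TopologicalSpace Y] (U : ι → Set Y) (ε : ι → ι → ZMod 2) (A : Set Y) :
    Prop :=
  ∃ φ : ι → Y → ZMod 2, (∀ i, ContinuousOn (φ i) (A ∩ U i)) ∧
    ∀ i j, ∀ x ∈ A, x ∈ U i → x ∈ U j → φ i x = φ j x + ε i j

lemma zmod2_self (a : ZMod 2) : a + a = 0 := CharTwo.add_self_eq_zero a

lemma Good.small {ι Y : Type*} [TopologicalSpace Y] {U : ι → Set Y} {ε : ι → ι → ZMod 2}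
    (H : ∀ x i j k, x ∈ U i → x ∈ U j → x ∈ U k → ε i j + ε j k = ε i k)
    {A : Set Y} (i : ι) (hA : A ⊆ U i) : Good U ε A := by
  refine ⟨fun j _ => ε i j, fun _ => continuousOn_const, ?_⟩
  intro j k x hx hj hk
  have h1 := H x i j k (hA hx) hj hk
  have h2 := zmod2_self (ε j k)
  simp only
  rw [← h1, add_assoc, h2, add_zero]

lemma Good.empty {ι Y : Type*} [TopologicalSpace Y] {U : ι → Set Y} {ε : ι → ι → ZMod 2} :
    Good U ε ∅ := ⟨fun _ _ => 0, fun _ => continuousOn_const, by simp⟩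

lemma Good.union {ι Y : Type*} [TopologicalSpace Y] {U : ι → Set Y} {ε : ι → ι → ZMod 2}
    (hU : ∀ i, IsOpen (U i)) (hcov : ∀ x, ∃ i, x ∈ U i)
    {A B : Set Y} (hA : Good U ε A) (hB : Good U ε B) (cA : IsClosed A) (cB : IsClosed B)
    (hAB : IsPreconnected (A ∩ B)) : Good U ε (A ∪ B) := by
  obtain ⟨φ, hφc, hφ⟩ := hA
  obtain ⟨ψ, hψc, hψ⟩ := hB
  choose I hI using hcov
  have hd : ∀ x ∈ A ∩ B, ∀ i, x ∈ U i → φ (I x) x - ψ (I x) x = φ i x - ψ i x := by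
    intro x hx i hi
    rw [hφ (I x) i x hx.1 (hI x) hi, hψ (I x) i x hx.2 (hI x) hi]
    ring
  have hc : ContinuousOn (fun x => φ (I x) x - ψ (I x) x) (A ∩ B) := by
    intro x hx
    have h1 : ContinuousWithinAt (fun y => φ (I x) y - ψ (I x) y) ((A ∩ B) ∩ U (I x)) x := by
      have h3 : Continuous (fun p : ZMod 2 × ZMod 2 => p.1 - p.2) := continuous_of_discreteTopology
      exact h3.continuousAt.comp_continuousWithinAt
        (((hφc (I x) x ⟨hx.1, hI x⟩).mono (fun y hy => ⟨hy.1.1, hy.2⟩)).prodMk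
        ((hψc (I x) x ⟨hx.2, hI x⟩).mono (fun y hy => ⟨hy.1.2, hy.2⟩)))
    have h2 : ContinuousWithinAt (fun x => φ (I x) x - ψ (I x) x) ((A ∩ B) ∩ U (I x)) x :=
      h1.congr (fun y hy => hd y hy.1 _ hy.2) rfl
    exact h2.mono_of_mem_nhdsWithin
      (Filter.inter_mem self_mem_nhdsWithin (mem_nhdsWithin_of_mem_nhds ((hU _).mem_nhds (hI x))))
  obtain ⟨δ, hδ⟩ : ∃ δ : ZMod 2, ∀ x ∈ A ∩ B, ∀ i, x ∈ U i → φ i x = ψ i x + δ := by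
    by_cases hne : (A ∩ B).Nonempty
    · obtain ⟨x0, hx0⟩ := hne
      refine ⟨φ (I x0) x0 - ψ (I x0) x0, fun x hx i hi => ?_⟩
      have := hAB.constant hc hx hx0
      rw [← this, hd x hx i hi]; ring
    · exact ⟨0, fun x hx => (hne ⟨x, hx⟩).elim⟩
  classical
  let χ : ι → Y → ZMod 2 := fun i x => if x ∈ A then φ i x else ψ i x + δ
  have hχA : ∀ i, ∀ x ∈ A, χ i x = φ i x := fun i x hx => if_pos hx
  have hχB : ∀ i, ∀ x ∈ B, x ∈ U i → χ i x = ψ i x + δ := by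
    intro i x hx hi
    by_cases hxA : x ∈ A
    · rw [hχA i x hxA, hδ x ⟨hxA, hx⟩ i hi]
    · exact if_neg hxA
  refine ⟨χ, ?_, ?_⟩
  · intro i x hx
    rw [Set.union_inter_distrib_right]
    apply ContinuousWithinAt.union
    · by_cases hxA : x ∈ A
      · exact (hφc i x ⟨hxA, hx.2⟩).congr (fun y hy => hχA i y hy.1) (hχA i x hxA)
      · apply continuousWithinAt_of_notMem_closure
        intro h
        exact hxA (cA.closure_subset_iff.2 Set.inter_subset_left h)
    · by_cases hxB : x ∈ B
      · exact ((hψc i x ⟨hxB, hx.2⟩).add continuousWithinAt_const).congr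
          (fun y hy => hχB i y hy.1 hy.2) (hχB i x hxB hx.2)
      · apply continuousWithinAt_of_notMem_closure
        intro h
        exact hxB (cB.closure_subset_iff.2 Set.inter_subset_left h)
  · intro i j x hx hi hj
    by_cases hxA : x ∈ A
    · rw [hχA i x hxA, hχA j x hxA]; exact hφ i j x hxA hi hj
    · have hxB : x ∈ B := hx.resolve_left hxA
      rw [hχB i x hxB hi, hχB j x hxB hj, hψ i j x hxB hi hj]; ring

lemma Good.transfer {ι Y Z : Type*} [TopologicalSpace Y] [TopologicalSpace Z] {U : ι → Set Y}
    {ε : ι → ι → ZMod 2} {A : Set Y} {C : Set Z} (f : Z → Y) (g : Y → Z)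
    (hg : ContinuousOn g A) (hgm : ∀ y ∈ A, g y ∈ C) (hfg : ∀ y ∈ A, f (g y) = y)
    (h : Good (fun i => f ⁻¹' U i) ε C) : Good U ε A := by
  obtain ⟨φ, hφc, hφ⟩ := h
  refine ⟨fun i y => φ i (g y), ?_, ?_⟩
  · intro i
    refine (hφc i).comp (hg.mono Set.inter_subset_left) ?_
    intro y hy
    refine ⟨hgm y hy.1, ?_⟩
    simp only [Set.mem_preimage]
    rw [hfg y hy.1]; exact hy.2
  · intro i j y hy hi hj
    refine hφ i j (g y) (hgm y hy) ?_ ?_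
    · simp only [Set.mem_preimage]
      rw [hfg y hy]; exact hi
    · simp only [Set.mem_preimage]
      rw [hfg y hy]; exact hj

abbrev E2 := EuclideanSpace ℝ (Fin 2)
abbrev E3 := EuclideanSpace ℝ (Fin 3)

lemma slab_convex {C : Set E2} (cC : Convex ℝ C) (k : Fin 2) (a b : ℝ) :
    Convex ℝ (C ∩ {x | a ≤ x k ∧ x k ≤ b}) := by
  apply cC.inter
  intro x hx y hy s t hs ht hst
  simp only [Set.mem_ofPred_eq] at hx hy ⊢
  simp only [PiLp.add_apply, PiLp.smul_apply, smul_eq_mul]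
  obtain rfl : t = 1 - s := by linarith
  constructor
  · nlinarith [mul_nonneg hs (sub_nonneg.2 hx.1), mul_nonneg ht (sub_nonneg.2 hy.1)]
  · nlinarith [mul_nonneg hs (sub_nonneg.2 hx.2), mul_nonneg ht (sub_nonneg.2 hy.2)]

lemma slab_closed {C : Set E2} (cC : IsClosed C) (k : Fin 2) (a b : ℝ) :
    IsClosed (C ∩ {x | a ≤ x k ∧ x k ≤ b}) := by
  have hc : Continuous fun x : E2 => x k := by fun_prop
  exact cC.inter ((isClosed_le continuous_const hc).inter (isClosed_le hc continuous_const))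

lemma Good.strip {ι : Type*} {U : ι → Set E2} {ε : ι → ι → ZMod 2}
    (hU : ∀ i, IsOpen (U i)) (hcov : ∀ x, ∃ i, x ∈ U i)
    {C : Set E2} (cC : IsClosed C) (hC : Convex ℝ C) (k : Fin 2) (η : ℝ) (hη : 0 < η) (a : ℝ)
    (h : ∀ b, Good U ε (C ∩ {x | b ≤ x k ∧ x k ≤ b + η})) (n : ℕ) :
    Good U ε (C ∩ {x | a ≤ x k ∧ x k ≤ a + (n + 1) * η}) := by
  induction n with
  | zero => simpa using h a
  | succ n ih =>
    have h1 := Good.union hU hcov ih (h (a + (n + 1) * η)) (slab_closed cC _ _ _)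
      (slab_closed cC _ _ _)
      ((slab_convex hC _ _ _).inter (slab_convex hC _ _ _)).isPreconnected
    convert h1 using 1
    ext x
    simp only [Set.mem_inter_iff, Set.mem_ofPred_eq, Set.mem_union]
    push_cast
    have : 0 ≤ (n + 1 : ℝ) * η := by positivity
    constructor
    · rintro ⟨hx, h1, h2⟩
      rcases le_total (x k) (a + (n + 1) * η) with h | h
      · exact Or.inl ⟨hx, h1, h⟩
      · exact Or.inr ⟨hx, h, by linarith⟩
    · rintro (⟨hx, h1, h2⟩ | ⟨hx, h1, h2⟩)
      · exact ⟨hx, h1, by linarith⟩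
      · exact ⟨hx, by linarith, by linarith⟩

lemma Good.strip' {ι : Type*} {U : ι → Set E2} {ε : ι → ι → ZMod 2}
    (hU : ∀ i, IsOpen (U i)) (hcov : ∀ x, ∃ i, x ∈ U i)
    {C : Set E2} (cC : IsClosed C) (hC : Convex ℝ C) (hb : ∀ x ∈ C, ‖x‖ ≤ 1)
    (k : Fin 2) (η : ℝ) (hη : 0 < η)
    (h : ∀ b, Good U ε (C ∩ {x | b ≤ x k ∧ x k ≤ b + η})) :
    Good U ε C := by
  obtain ⟨n, hn⟩ := exists_nat_gt (2 / η)
  have h1 := Good.strip hU hcov cC hC k η hη (-1) h n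
  convert h1 using 1
  ext x
  simp only [Set.mem_inter_iff, Set.mem_ofPred_eq]
  refine ⟨fun hx => ⟨hx, ?_⟩, fun hx => hx.1⟩
  have h2 := (PiLp.norm_apply_le x k).trans (hb x hx)
  rw [Real.norm_eq_abs, abs_le] at h2
  rw [div_lt_iff₀ hη] at hn
  constructor <;> nlinarith

lemma Good.ball {ι : Type*} {U : ι → Set E2} {ε : ι → ι → ZMod 2}
    (hU : ∀ i, IsOpen (U i)) (hcov : ∀ x, ∃ i, x ∈ U i)
    (H : ∀ x i j k, x ∈ U i → x ∈ U j → x ∈ U k → ε i j + ε j k = ε i k) :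
    Good U ε (Metric.closedBall (0 : E2) 1) := by
  obtain ⟨δ, hδ, hL⟩ := lebesgue_number_lemma_of_metric (isCompact_closedBall (0 : E2) 1) hU
    (fun x _ => Set.mem_iUnion.2 (hcov x))
  have hη : 0 < δ / 2 := by positivity
  have hb : ∀ x ∈ Metric.closedBall (0 : E2) 1, ‖x‖ ≤ 1 := fun x hx => by simpa using hx
  refine Good.strip' hU hcov Metric.isClosed_closedBall (convex_closedBall _ _) hb 0 (δ/2) hη ?_
  intro a
  refine Good.strip' hU hcov (slab_closed Metric.isClosed_closedBall _ _ _)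
    (slab_convex (convex_closedBall _ _) _ _ _) (fun x hx => hb x hx.1) 1 (δ/2) hη ?_
  intro b
  rcases Set.eq_empty_or_nonempty
    ((Metric.closedBall (0 : E2) 1 ∩ {x | a ≤ x 0 ∧ x 0 ≤ a + δ / 2}) ∩
      {x | b ≤ x 1 ∧ x 1 ≤ b + δ / 2}) with he | ⟨x, hx⟩
  · rw [he]; exact Good.empty
  · obtain ⟨i, hi⟩ := hL x hx.1.1
    refine Good.small H i (fun y hy => hi ?_)
    rw [Metric.mem_ball, EuclideanSpace.dist_eq, Fin.sum_univ_two, Real.sqrt_lt' hδ]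
    simp only [Set.mem_inter_iff, Set.mem_ofPred_eq] at hx hy
    have e0 : |y 0 - x 0| ≤ δ / 2 := by rw [abs_le]; constructor <;> linarith
    have e1 : |y 1 - x 1| ≤ δ / 2 := by rw [abs_le]; constructor <;> linarith
    rw [Real.dist_eq, Real.dist_eq]
    have p0 := abs_nonneg (y 0 - x 0)
    have p1 := abs_nonneg (y 1 - x 1)
    nlinarith

abbrev S2 := ↥(Metric.sphere (0 : E3) 1)

noncomputable def ster (σ : ℝ) (p : E2) : E3 :=
  !₂[2 * p 0 / (1 + p 0 ^ 2 + p 1 ^ 2), 2 * p 1 / (1 + p 0 ^ 2 + p 1 ^ 2),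
    σ * (1 - p 0 ^ 2 - p 1 ^ 2) / (1 + p 0 ^ 2 + p 1 ^ 2)]

lemma mem_S2 (x : E3) : x ∈ Metric.sphere (0 : E3) 1 ↔ x 0 ^ 2 + x 1 ^ 2 + x 2 ^ 2 = 1 := by
  rw [mem_sphere_zero_iff_norm, EuclideanSpace.norm_eq, Real.sqrt_eq_one, Fin.sum_univ_three]
  simp [Real.norm_eq_abs]

lemma ster_mem (σ : ℝ) (hσ : σ ^ 2 = 1) (p : E2) : ster σ p ∈ Metric.sphere (0 : E3) 1 := by
  rw [mem_S2]
  have h : (1 + p 0 ^ 2 + p 1 ^ 2) ≠ 0 := by positivity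
  simp only [ster, PiLp.toLp_apply, Matrix.cons_val_zero, Matrix.cons_val_one, Matrix.cons_val]
  field_simp
  rw [hσ]; ring

noncomputable def sterS (σ : ℝ) (hσ : σ ^ 2 = 1) (p : E2) : S2 := ⟨ster σ p, ster_mem σ hσ p⟩

lemma sterS_cont (σ : ℝ) (hσ : σ ^ 2 = 1) : Continuous (sterS σ hσ) := by
  apply Continuous.subtype_mk
  unfold ster
  have h : ∀ p : E2, (1 + p 0 ^ 2 + p 1 ^ 2) ≠ 0 := fun p => by positivity
  refine (PiLp.continuous_toLp 2 _).comp ?_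
  refine continuous_pi fun i => ?_
  fin_cases i
  · exact Continuous.div (by fun_prop) (by fun_prop) h
  · exact Continuous.div (by fun_prop) (by fun_prop) h
  · exact Continuous.div (by fun_prop) (by fun_prop) h

noncomputable def sterInv (σ : ℝ) (x : S2) : E2 :=
  !₂[x.1 0 / (1 + σ * x.1 2), x.1 1 / (1 + σ * x.1 2)]

def hemi (σ : ℝ) : Set S2 := {x | 0 ≤ σ * x.1 2}

lemma hemi_closed (σ : ℝ) : IsClosed (hemi σ) := by
  apply isClosed_le continuous_const
  fun_prop

lemma Good.hemi {ι : Type*} {U : ι → Set S2} {ε : ι → ι → ZMod 2}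
    (hU : ∀ i, IsOpen (U i)) (hcov : ∀ x, ∃ i, x ∈ U i)
    (H : ∀ x i j k, x ∈ U i → x ∈ U j → x ∈ U k → ε i j + ε j k = ε i k)
    (σ : ℝ) (hσ : σ ^ 2 = 1) : Good U ε (hemi σ) := by
  refine Good.transfer (C := Metric.closedBall (0 : E2) 1) (sterS σ hσ) (sterInv σ) ?_ ?_ ?_ ?_
  · unfold sterInv
    refine (PiLp.continuous_toLp 2 _).comp_continuousOn ?_
    refine continuousOn_pi.2 fun i => ?_
    have h : ∀ x ∈ SComplex.hemi σ, (1 + σ * x.1 2) ≠ 0 := by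
      intro x hx
      have : 0 ≤ σ * x.1 2 := hx
      positivity
    fin_cases i
    · exact ContinuousOn.div (by fun_prop) (by fun_prop) h
    · exact ContinuousOn.div (by fun_prop) (by fun_prop) h
  · intro x hx
    have h0 : 0 ≤ σ * x.1 2 := hx
    have h1 := (mem_S2 _).1 x.2
    rw [mem_closedBall_zero_iff, EuclideanSpace.norm_eq, Real.sqrt_le_one, Fin.sum_univ_two]
    simp only [sterInv, PiLp.toLp_apply, Matrix.cons_val_zero, Matrix.cons_val_one,
      Real.norm_eq_abs, sq_abs]
    rw [div_pow, div_pow, ← add_div, div_le_one (by positivity)]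
    nlinarith [sq_nonneg (x.1 2)]
  · intro x hx
    have h0 : 0 ≤ σ * x.1 2 := hx
    have h1 := (mem_S2 _).1 x.2
    have h3 : (1 + σ * x.1 2) ≠ 0 := by positivity
    have hD : 1 + (x.1 0 / (1 + σ * x.1 2)) ^ 2 + (x.1 1 / (1 + σ * x.1 2)) ^ 2
        = 2 / (1 + σ * x.1 2) := by
      field_simp
      have : σ ^ 2 * x.1 2 ^ 2 = x.1 2 ^ 2 := by rw [hσ]; ring
      nlinarith
    have hN : 1 - (x.1 0 / (1 + σ * x.1 2)) ^ 2 - (x.1 1 / (1 + σ * x.1 2)) ^ 2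
        = 2 * σ * x.1 2 / (1 + σ * x.1 2) := by
      field_simp
      have : σ ^ 2 * x.1 2 ^ 2 = x.1 2 ^ 2 := by rw [hσ]; ring
      nlinarith
    apply Subtype.ext
    ext i
    fin_cases i
    · simp only [sterS, ster, sterInv, PiLp.toLp_apply, Matrix.cons_val_zero, Matrix.cons_val_one,
        Matrix.cons_val, Fin.zero_eta]
      rw [hD]; field_simp
    · simp only [sterS, ster, sterInv, PiLp.toLp_apply, Matrix.cons_val_zero, Matrix.cons_val_one,
        Matrix.cons_val, Fin.mk_one]
      rw [hD]; field_simp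
    · simp only [sterS, ster, sterInv, PiLp.toLp_apply, Matrix.cons_val_zero, Matrix.cons_val_one,
        Matrix.cons_val, Fin.reduceFinMk]
      rw [hD, hN]; field_simp
      rw [hσ]; ring
  · refine Good.ball (fun i => (hU i).preimage (sterS_cont σ hσ)) (fun x => hcov _) ?_
    intro x i j k
    exact H _ i j k

lemma Good.sphere {ι : Type*} {U : ι → Set S2} {ε : ι → ι → ZMod 2}
    (hU : ∀ i, IsOpen (U i)) (hcov : ∀ x, ∃ i, x ∈ U i)
    (H : ∀ x i j k, x ∈ U i → x ∈ U j → x ∈ U k → ε i j + ε j k = ε i k) :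
    Good U ε Set.univ := by
  have h1 := Good.hemi hU hcov H 1 (by norm_num)
  have h2 := Good.hemi hU hcov H (-1) (by norm_num)
  have h3 := Good.union hU hcov h1 h2 (hemi_closed _) (hemi_closed _) (by
    have hs : IsPreconnected (Metric.sphere (0 : E2) 1) := by
      apply isPreconnected_sphere
      rw [← Module.finrank_eq_rank]
      simp
    have hi := hs.image (sterS 1 (by norm_num)) (sterS_cont _ _).continuousOn
    convert hi using 1
    ext x
    simp only [SComplex.hemi, Set.mem_inter_iff, Set.mem_ofPred_eq, Set.mem_image]
    have hx1 := (mem_S2 _).1 x.2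
    constructor
    · rintro ⟨ha, hb⟩
      have hz : x.1 2 = 0 := by linarith
      rw [hz] at hx1
      refine ⟨!₂[x.1 0, x.1 1], ?_, ?_⟩
      · rw [mem_sphere_zero_iff_norm, EuclideanSpace.norm_eq, Real.sqrt_eq_one, Fin.sum_univ_two]
        simp [Real.norm_eq_abs]
        linarith
      · have e : 1 + x.1 0 ^ 2 + x.1 1 ^ 2 = 2 := by linarith
        have e' : 1 - x.1 0 ^ 2 - x.1 1 ^ 2 = 0 := by linarith
        apply Subtype.ext
        ext i
        fin_cases i
        · simp [sterS, ster, e]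
        · simp [sterS, ster, e]
        · simp [sterS, ster, e', hz]
    · rintro ⟨p, hp, rfl⟩
      rw [mem_sphere_zero_iff_norm, EuclideanSpace.norm_eq, Real.sqrt_eq_one,
        Fin.sum_univ_two] at hp
      simp only [Real.norm_eq_abs, sq_abs] at hp
      have e' : 1 - p 0 ^ 2 - p 1 ^ 2 = 0 := by linarith
      simp [sterS, ster, e'])
  convert h3 using 1
  ext x
  simp only [SComplex.hemi, Set.mem_univ, Set.mem_union, Set.mem_ofPred_eq, true_iff]
  rcases le_total 0 (x.1 2) with h | h
  · left; linarith
  · right; linarith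

end SComplex

namespace SComplex

lemma potential (L : SComplex) (h : L.realSpace ≃ₜ S2) (ε : ℕ → ℕ → ZMod 2)
    (H : ∀ i j k, ({i, j, k} : Finset ℕ) ∈ L.faces → ε i j + ε j k = ε i k) :
    ∃ ψ : ℕ → ZMod 2, ∀ i j, ({i, j} : Finset ℕ) ∈ L.faces → ψ i = ψ j + ε i j := by
  have hcoord : ∀ v, Continuous fun w : L.realSpace => w.1 v := fun v =>
    (continuous_apply v).comp continuous_subtype_val
  let U : ℕ → Set S2 := fun v => {x | (h.symm x).1 v ≠ 0}
  have hU : ∀ v, IsOpen (U v) := fun v =>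
    isOpen_ne_fun ((hcoord v).comp h.symm.continuous) continuous_const
  have hcov : ∀ x, ∃ i, x ∈ U i := by
    intro x
    by_contra hcon
    push Not at hcon
    obtain ⟨-, s, hs, -, hsum⟩ := (h.symm x).2
    have : ∑ v ∈ s, (h.symm x).1 v = 0 := Finset.sum_eq_zero (fun v _ => by
      have := hcon v
      simpa [U] using this)
    rw [this] at hsum
    exact zero_ne_one hsum
  obtain ⟨φ, hφc, hφ⟩ := Good.sphere (ε := ε) hU hcov (by
    intro x i j k hi hj hk
    apply H
    obtain ⟨-, s, hs, hsupp, -⟩ := (h.symm x).2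
    refine L.down_closed s hs _ ?_ (by simp)
    intro v hv
    simp only [Finset.mem_insert, Finset.mem_singleton] at hv
    rcases hv with rfl | rfl | rfl
    · exact hsupp _ hi
    · exact hsupp _ hj
    · exact hsupp _ hk)
  have hconst : ∀ v, ∀ x ∈ U v, ∀ y ∈ U v, φ v x = φ v y := by
    intro v x hx y hy
    have hst : IsPreconnected {w | w ∈ L.realSpace ∧ w v ≠ 0} := by
      rcases Set.eq_empty_or_nonempty {w | w ∈ L.realSpace ∧ w v ≠ 0} with he | ⟨w0, hw0⟩
      · rw [he]; exact isPreconnected_empty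
      have hv : ({v} : Finset ℕ) ∈ L.faces := by
        obtain ⟨-, s, hs, hsupp, -⟩ := hw0.1
        exact L.down_closed s hs _ (by simpa using hsupp v hw0.2) (by simp)
      have hmem : (Pi.single v 1 : ℕ → ℝ) ∈ {w | w ∈ L.realSpace ∧ w v ≠ 0} := by
        refine ⟨⟨fun u => ?_, {v}, hv, fun u hu => ?_, by simp⟩, by simp⟩
        · by_cases huv : u = v
          · subst huv; simp
          · simp [huv]
        · by_contra huv
          simp at huv
          simp [huv] at hu
      refine (StarConvex.isPathConnected (a := Pi.single v 1) ?_ hmem).isConnected.isPreconnected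
      intro w hw p q hp hq hpq
      obtain ⟨⟨hnn, s, hs, hsupp, hsum⟩, hwv⟩ := hw
      have hvs : v ∈ s := hsupp v hwv
      refine ⟨⟨fun u => ?_, s, hs, fun u hu => ?_, ?_⟩, ?_⟩
      · have := hmem.1.1 u
        have := hnn u
        simp only [Pi.add_apply, Pi.smul_apply, smul_eq_mul]
        positivity
      · by_contra hus
        have h1 : w u = 0 := by
          by_contra h1; exact hus (hsupp u h1)
        have h2 : u ≠ v := fun h2 => hus (h2 ▸ hvs)
        simp [h1, h2] at hu
      · simp only [Pi.add_apply, Pi.smul_apply, smul_eq_mul, Finset.sum_add_distrib,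
          ← Finset.mul_sum, hsum]
        rw [Finset.sum_pi_single']
        simp [hvs, hpq]
      · have := lt_of_le_of_ne (hnn v) (Ne.symm hwv)
        simp only [Pi.add_apply, Pi.smul_apply, smul_eq_mul, Pi.single_eq_same]
        have : 0 < p * 1 + q * w v := by
          rcases hp.eq_or_lt with h0 | h0
          · have : q = 1 := by linarith
            rw [← h0, this]; linarith
          · have : 0 ≤ q * w v := by positivity
            linarith
        exact this.ne'
    have hst' : IsPreconnected {w : L.realSpace | w.1 v ≠ 0} := by
      rw [← Topology.IsInducing.subtypeVal.isPreconnected_image]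
      convert hst using 1
      ext w
      simp [and_comm]
    have hc : ContinuousOn (fun w => φ v (h w)) {w : L.realSpace | w.1 v ≠ 0} := by
      refine (hφc v).comp h.continuous.continuousOn ?_
      intro w hw
      refine ⟨trivial, ?_⟩
      simpa [U] using hw
    have := hst'.constant hc (x := h.symm x) (y := h.symm y) hx hy
    simpa using this
  classical
  refine ⟨fun v => if hv : ∃ x, x ∈ U v then φ v hv.choose else 0, ?_⟩
  have hψ : ∀ v x, x ∈ U v →
      (if hv : ∃ x, x ∈ U v then φ v hv.choose else 0) = φ v x := by
    intro v x hx
    have hv : ∃ x, x ∈ U v := ⟨x, hx⟩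
    rw [dif_pos hv]
    exact hconst v _ hv.choose_spec _ hx
  intro i j hij
  by_cases hne : i = j
  · subst hne
    have := H i i i (by simpa using hij)
    have h0 : ε i i = 0 := by simpa using this
    rw [h0, add_zero]
  have hm : (fun v => if v = i ∨ v = j then (1/2 : ℝ) else 0) ∈ L.realSpace := by
    refine ⟨fun v => ?_, {i, j}, hij, fun v hv => ?_, ?_⟩
    · dsimp only; split_ifs <;> norm_num
    · by_contra hc
      simp at hc
      simp [hc] at hv
    · rw [Finset.sum_pair hne]; simp; norm_num
  have hi : h ⟨_, hm⟩ ∈ U i := by simp [U]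
  have hj : h ⟨_, hm⟩ ∈ U j := by simp [U]
  simp only
  rw [hψ i _ hi, hψ j _ hj]
  exact hφ i j _ trivial hi hj

/-- mod 2 boundary of a triangle -/
def bd (t : Finset ℕ) : Finset ℕ → ZMod 2 := fun e => if e.card = 2 ∧ e ⊆ t then 1 else 0

lemma pair_sub {i j k : ℕ} {e : Finset ℕ} (h1 : i ≠ j) (h2 : j ≠ k) (h3 : i ≠ k) :
    (e.card = 2 ∧ e ⊆ {i, j, k}) ↔ e = {i, j} ∨ e = {j, k} ∨ e = {i, k} := by
  constructor
  · rintro ⟨hc, hs⟩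
    obtain ⟨x, y, hxy, rfl⟩ := Finset.card_eq_two.1 hc
    have hx := hs (Finset.mem_insert_self x {y})
    have hy := hs (Finset.mem_insert_of_mem (Finset.mem_singleton_self y))
    simp only [Finset.mem_insert, Finset.mem_singleton] at hx hy
    rcases hx with rfl | rfl | rfl <;> rcases hy with rfl | rfl | rfl <;>
      simp_all [Finset.pair_comm]
  · rintro (rfl | rfl | rfl)
    · exact ⟨Finset.card_pair h1, by intro x; simp; tauto⟩
    · exact ⟨Finset.card_pair h2, by intro x; simp; tauto⟩
    · exact ⟨Finset.card_pair h3, by intro x; simp; tauto⟩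

lemma bd_eq {i j k : ℕ} (h1 : i ≠ j) (h2 : j ≠ k) (h3 : i ≠ k) :
    bd {i, j, k} = Pi.single {i, j} 1 + Pi.single {j, k} 1 + Pi.single {i, k} 1 := by
  have n1 : ({i, j} : Finset ℕ) ≠ {j, k} := by
    intro h
    have : i ∈ ({j, k} : Finset ℕ) := h ▸ (by simp)
    simp at this; tauto
  have n2 : ({i, j} : Finset ℕ) ≠ {i, k} := by
    intro h
    have : j ∈ ({i, k} : Finset ℕ) := h ▸ (by simp)
    simp at this; tauto
  have n3 : ({j, k} : Finset ℕ) ≠ {i, k} := by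
    intro h
    have : j ∈ ({i, k} : Finset ℕ) := h ▸ (by simp)
    simp at this; tauto
  ext e
  simp only [bd, pair_sub h1 h2 h3, Pi.add_apply, Pi.single_apply]
  by_cases e1 : e = {i, j}
  · subst e1; simp [n1, n2]
  by_cases e2 : e = {j, k}
  · subst e2; simp [n1.symm, n3]
  by_cases e3 : e = {i, k}
  · subst e3; simp [n2.symm, n3.symm]
  simp [e1, e2, e3]

lemma exists_class (L : SComplex) (h : L.realSpace ≃ₜ S2) {a b c : ℕ}
    (h1 : a ≠ b) (h2 : b ≠ c) (h3 : a ≠ c)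
    (hab : ({a, b} : Finset ℕ) ∈ L.faces) (hbc : ({b, c} : Finset ℕ) ∈ L.faces)
    (hac : ({a, c} : Finset ℕ) ∈ L.faces) :
    ∃ cl : Finset ℕ → ZMod 2, ∀ e : Finset ℕ, e.card = 2 →
      ∑ t ∈ L.faces.filter (fun t => t.card = 3 ∧ e ⊆ t), cl t =
        if e ⊆ {a, b, c} then 1 else 0 := by
  classical
  by_cases hz : bd {a, b, c} ∈
      Submodule.span (ZMod 2) (bd '' (L.faces.filter (fun t : Finset ℕ => t.card = 3) : Set (Finset ℕ)))
  · rw [Submodule.mem_span_image_finset_iff_exists_fun] at hz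
    obtain ⟨cl₀, hcl₀⟩ := hz
    obtain ⟨cl, hcl'⟩ : ∃ cl : Finset ℕ → ZMod 2,
        ∀ t : ↥(L.faces.filter (fun t : Finset ℕ => t.card = 3)), cl t.1 = cl₀ t :=
      ⟨fun t => if ht : t ∈ L.faces.filter (fun t : Finset ℕ => t.card = 3) then cl₀ ⟨t, ht⟩ else 0,
        fun t => dif_pos t.2⟩
    have hcl : ∑ t ∈ L.faces.filter (fun t : Finset ℕ => t.card = 3), cl t • bd t = bd {a, b, c} := by
      rw [← hcl₀, ← Finset.sum_coe_sort]
      exact Finset.sum_congr rfl (fun t _ => by rw [hcl'])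
    refine ⟨cl, fun e he => ?_⟩
    have := congrFun hcl e
    simp only [Finset.sum_apply, Pi.smul_apply, bd, he, true_and, smul_eq_mul, mul_ite, mul_one,
      mul_zero] at this
    rw [← this, ← Finset.sum_filter, Finset.filter_filter]
  · exfalso
    obtain ⟨f, hf, hker⟩ := Submodule.exists_le_ker_of_notMem hz
    let ε : ℕ → ℕ → ZMod 2 := fun i j => if i = j then 0 else f (Pi.single {i, j} 1)
    obtain ⟨ψ, hψ⟩ := potential L h ε (by
      intro i j k hijk
      by_cases hij : i = j
      · subst hij; simp [ε]
      by_cases hjk : j = k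
      · subst hjk; simp [ε]
      by_cases hik : i = k
      · subst hik
        simp only [ε, if_neg hij, if_neg hjk, if_true, Finset.pair_comm j i]
        exact zmod2_self _
      have hm : bd {i, j, k} ∈ LinearMap.ker f := hker (Submodule.subset_span
        ⟨{i, j, k}, by
          simp only [Finset.coe_filter, Set.mem_ofPred_eq]
          exact ⟨hijk, Finset.card_eq_three.2 ⟨i, j, k, hij, hik, hjk, rfl⟩⟩, rfl⟩)
      rw [LinearMap.mem_ker, bd_eq hij hjk hik, map_add, map_add] at hm
      simp only [ε, if_neg hij, if_neg hjk, if_neg hik]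
      have h2 := zmod2_self (f (Pi.single {i, k} 1))
      exact (add_right_cancel (hm.trans h2.symm)))
    apply hf
    rw [bd_eq h1 h2 h3, map_add, map_add]
    have e1 := hψ a b hab
    have e2 := hψ b c hbc
    have e3 := hψ a c hac
    simp only [ε, if_neg h1, if_neg h2, if_neg h3] at e1 e2 e3
    have h4 := zmod2_self (f (Pi.single {a, c} 1))
    rw [e1, e2, add_assoc] at e3
    have e4 := add_left_cancel e3
    rw [add_comm] at e4
    rw [e4, h4]

end SComplex

namespace SComplex

/-! ### Generalities on complexes -/

lemma exists_facet (K : SComplex) {s : Finset ℕ} (hs : s ∈ K.faces) :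
    ∃ F, K.IsFacet F ∧ s ⊆ F := by
  obtain ⟨F, hsF, hF⟩ := K.faces.exists_le_maximal hs
  refine ⟨F, ⟨hF.1, fun t ht hFt => ?_⟩, hsF⟩
  exact le_antisymm hFt (hF.2 ht hFt)

lemma pure_iff (K : SComplex) : K.IsPure 3 ↔ K.faces.Nonempty ∧
    ∀ s ∈ K.faces, ∃ F ∈ K.faces, s ⊆ F ∧ F.card = 4 := by
  constructor
  · rintro ⟨h1, h2⟩
    refine ⟨h1, fun s hs => ?_⟩
    obtain ⟨F, hF, hsF⟩ := K.exists_facet hs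
    exact ⟨F, hF.1, hsF, h2 F hF⟩
  · rintro ⟨h1, h2⟩
    refine ⟨h1, fun s hs => ?_⟩
    obtain ⟨F, hF, hsF, hc⟩ := h2 s hs.1
    rw [hs.2 F hF hsF, hc]

lemma facet_iff {K : SComplex} (hK : K.IsPure 3) {s : Finset ℕ} :
    K.IsFacet s ↔ s ∈ K.faces ∧ s.card = 4 := by
  constructor
  · intro h
    exact ⟨h.1, hK.2 s h⟩
  · rintro ⟨h1, h2⟩
    refine ⟨h1, fun t ht hst => ?_⟩
    obtain ⟨F, hF, htF, hc⟩ := (K.pure_iff.1 hK).2 t ht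
    exact Finset.eq_of_subset_of_card_le hst (by rw [h2, ← hc]; exact Finset.card_le_card htF)

/-- adjacency in the link of `s` -/
def LAdj (K : SComplex) (s : Finset ℕ) (x y : ℕ) : Prop :=
  x ∉ s ∧ y ∉ s ∧ insert x (insert y s) ∈ K.faces

lemma LAdj.symm {K : SComplex} {s : Finset ℕ} {x y : ℕ} (h : K.LAdj s x y) : K.LAdj s y x :=
  ⟨h.2.1, h.1, by rw [Finset.insert_comm]; exact h.2.2⟩

lemma vertAdj_lk {K : SComplex} {s : Finset ℕ} : (K.lk s).VertAdj = K.LAdj s := by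
  ext x y
  simp only [VertAdj, lk, Finset.mem_filter, LAdj]
  have e : ({x, y} : Finset ℕ) ∪ s = insert x (insert y s) := by ext z; simp
  rw [e]
  constructor
  · rintro ⟨-, h2, h3⟩
    have hx : ∀ z, z ∈ ({x, y} : Finset ℕ) → z ∉ s := by
      intro z hz hzs
      have : z ∈ ({x, y} : Finset ℕ) ∩ s := Finset.mem_inter.2 ⟨hz, hzs⟩
      rw [h2] at this; simp at this
    exact ⟨hx x (by simp), hx y (by simp), h3⟩
  · rintro ⟨h1, h2, h3⟩
    refine ⟨K.down_closed _ h3 _ ?_ (by simp), ?_, h3⟩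
    · intro z; simp; tauto
    · ext z; simp; rintro (rfl | rfl) <;> assumption

lemma vert_lk {K : SComplex} {s : Finset ℕ} {x : ℕ} :
    {x} ∈ (K.lk s).faces ↔ x ∉ s ∧ insert x s ∈ K.faces := by
  have := congrFun (congrFun (vertAdj_lk (K := K) (s := s)) x) x
  simp only [VertAdj, LAdj, Finset.pair_eq_singleton, Finset.insert_idem] at this
  rw [this]; tauto

lemma lk_conn_iff {K : SComplex} {s : Finset ℕ} : (K.lk s).Conn ↔
    (∃ x, x ∉ s ∧ insert x s ∈ K.faces) ∧ ∀ x y, x ∉ s → y ∉ s → insert x s ∈ K.faces →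
      insert y s ∈ K.faces → Relation.ReflTransGen (K.LAdj s) x y := by
  simp only [Conn, vertAdj_lk, vert_lk]
  constructor
  · rintro ⟨⟨t, ht⟩, h2⟩
    refine ⟨?_, fun x y h1 h3 h4 h5 => h2 x y ⟨h1, h4⟩ ⟨h3, h5⟩⟩
    have hne : t ≠ ∅ := fun h => (K.lk s).not_empty_mem (h ▸ ht)
    obtain ⟨x, hx⟩ := Finset.nonempty_iff_ne_empty.2 hne
    exact ⟨x, vert_lk.1 ((K.lk s).down_closed t ht {x} (by simpa using hx) (by simp))⟩
  · rintro ⟨⟨x, hx⟩, h2⟩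
    exact ⟨⟨{x}, vert_lk.2 hx⟩, fun x y h1 h3 => h2 x y h1.1 h3.1 h1.2 h3.2⟩

lemma card_two_iff {α : Type*} [DecidableEq α] {A : Finset α} :
    A.card = 2 ↔ ∃ x y, x ≠ y ∧ ∀ z, z ∈ A ↔ z = x ∨ z = y := by
  rw [Finset.card_eq_two]
  constructor
  · rintro ⟨x, y, h, rfl⟩; exact ⟨x, y, h, by simp⟩
  · rintro ⟨x, y, h, h2⟩; exact ⟨x, y, h, by ext z; simp [h2]⟩

/-! ### The context -/

/-- triangles of the link of `u` -/
def Tri (K : SComplex) (u : ℕ) (T : Finset ℕ) : Prop :=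
  u ∉ T ∧ T.card = 3 ∧ insert u T ∈ K.faces

structure Ctx (K : SComplex) (u : ℕ) (Q : Finset ℕ) (cl : Finset ℕ → Bool) (n : Bool → ℕ) :
    Prop where
  npm : K.IsNormalPseudomanifold 3
  hu : {u} ∈ K.faces
  Qcard : Q.card = 3
  uQ : u ∉ Q
  Qsub : ∀ t, t ⊂ Q → insert u t ∈ K.faces
  Qnot : Q ∉ K.faces
  c1 : ∀ e T₁ T₂, e.card = 2 → e ⊆ T₁ → e ⊆ T₂ → K.Tri u T₁ → K.Tri u T₂ → ¬ e ⊆ Q →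
    cl T₁ = cl T₂
  c2 : ∀ e, e.card = 2 → e ⊆ Q → ∀ i, ∃ T, K.Tri u T ∧ e ⊆ T ∧ cl T = i
  c3 : ∀ e T₁ T₂, e.card = 2 → e ⊆ T₁ → e ⊆ T₂ → K.Tri u T₁ → K.Tri u T₂ → e ⊆ Q →
    cl T₁ = cl T₂ → T₁ = T₂
  fresh : ∀ i, ∀ s ∈ K.faces, n i ∉ s
  ninj : n true ≠ n false

/-- faces of the disc of colour `i` (including the empty set) -/
def Dd (K : SComplex) (u : ℕ) (cl : Finset ℕ → Bool) (i : Bool) (t : Finset ℕ) : Prop :=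
  ∃ T, K.Tri u T ∧ cl T = i ∧ t ⊆ T

namespace Ctx

variable {K : SComplex} {u : ℕ} {Q : Finset ℕ} {cl : Finset ℕ → Bool} {n : Bool → ℕ}

lemma inj (h : Ctx K u Q cl n) {i j : Bool} (hij : n i = n j) : i = j := by
  have := h.ninj
  cases i <;> cases j <;> simp_all

lemma pure (h : Ctx K u Q cl n) {s : Finset ℕ} (hs : s ∈ K.faces) :
    ∃ F ∈ K.faces, s ⊆ F ∧ F.card = 4 := (K.pure_iff.1 h.npm.1).2 s hs

lemma conn (h : Ctx K u Q cl n) {s : Finset ℕ} (hs : s ∈ K.faces) (hc : s.card ≤ 2) :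
    ∀ x y, x ∉ s → y ∉ s → insert x s ∈ K.faces →
      insert y s ∈ K.faces → Relation.ReflTransGen (K.LAdj s) x y :=
  (lk_conn_iff.1 (h.npm.2.2.2 s hs hc)).2

lemma two (h : Ctx K u Q cl n) {r : Finset ℕ} (hr : r ∈ K.faces) (hc : r.card = 3) :
    ∃ F G, F ≠ G ∧ ∀ H, (H ∈ K.faces ∧ H.card = 4 ∧ r ⊆ H) ↔ H = F ∨ H = G := by
  have := h.npm.2.2.1 r hr hc
  rw [card_two_iff] at this
  simpa using this

lemma triK (_h : Ctx K u Q cl n) {T : Finset ℕ} (hT : K.Tri u T) : T ∈ K.faces :=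
  K.down_closed _ hT.2.2 _ (Finset.subset_insert _ _) (by
    intro h0; have := hT.2.1; rw [h0] at this; simp at this)

lemma p1 (h : Ctx K u Q cl n) {w : ℕ} (hw : w ∉ Q) {T₁ T₂ : Finset ℕ} (h1 : K.Tri u T₁)
    (h2 : K.Tri u T₂) (w1 : w ∈ T₁) (w2 : w ∈ T₂) : cl T₁ = cl T₂ := by
  have key : ∀ T, K.Tri u T → w ∈ T → ∃ y ∈ T, y ≠ w := by
    intro T hT hw
    exact Finset.exists_mem_ne (by rw [hT.2.1]; norm_num) w
  obtain ⟨y, y1, yw⟩ := key T₁ h1 w1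
  obtain ⟨z, z2, zw⟩ := key T₂ h2 w2
  have sub : ∀ T, K.Tri u T → ∀ t ⊆ T, insert u t ∈ K.faces := fun T hT t ht =>
    K.down_closed _ hT.2.2 _ (Finset.insert_subset_insert _ ht) (by simp)
  have uw : u ≠ w := fun e => h1.1 (e ▸ w1)
  have hs : ({u, w} : Finset ℕ) ∈ K.faces := sub T₁ h1 {w} (by simpa using w1)
  have hpath := h.conn hs (Finset.card_le_two) y z
    (by simp only [Finset.mem_insert, Finset.mem_singleton, not_or]
        exact ⟨fun e => h1.1 (e ▸ y1), yw⟩)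
    (by simp only [Finset.mem_insert, Finset.mem_singleton, not_or]
        exact ⟨fun e => h2.1 (e ▸ z2), zw⟩)
    (by rw [Finset.insert_comm]; exact sub T₁ h1 {y, w} (by
          intro v; simp only [Finset.mem_insert, Finset.mem_singleton]
          rintro (rfl | rfl) <;> assumption))
    (by rw [Finset.insert_comm]; exact sub T₂ h2 {z, w} (by
          intro v; simp only [Finset.mem_insert, Finset.mem_singleton]
          rintro (rfl | rfl) <;> assumption))
  have pairsub : ∀ {T : Finset ℕ} {v : ℕ}, w ∈ T → v ∈ T → ({w, v} : Finset ℕ) ⊆ T := by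
    intro T v hw hv x
    simp only [Finset.mem_insert, Finset.mem_singleton]
    rintro (rfl | rfl) <;> assumption
  have nQ : ∀ v, ¬ ({w, v} : Finset ℕ) ⊆ Q := fun v hv => hw (hv (by simp))
  have main : ∀ z', Relation.ReflTransGen (K.LAdj {u, w}) y z' →
      (z' ≠ w ∧ ∀ T, K.Tri u T → w ∈ T → z' ∈ T → cl T = cl T₁) := by
    intro z' hz'
    induction hz' with
    | refl =>
      exact ⟨yw, fun T hT hwT hyT => h.c1 {w, y} T T₁ (Finset.card_pair yw.symm)
        (pairsub hwT hyT) (pairsub w1 y1) hT h1 (nQ y)⟩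
    | @tail p q _ hadj ih =>
      obtain ⟨hp, hq, hpq⟩ := hadj
      simp only [Finset.mem_insert, Finset.mem_singleton, not_or] at hp hq
      by_cases epq : p = q
      · subst epq; exact ih
      refine ⟨hq.2, fun T hT hwT hqT => ?_⟩
      have ht : K.Tri u {w, p, q} := by
        refine ⟨?_, Finset.card_eq_three.2 ⟨w, p, q, Ne.symm hp.2, Ne.symm hq.2, epq, rfl⟩, ?_⟩
        · simp only [Finset.mem_insert, Finset.mem_singleton, not_or]
          exact ⟨uw, Ne.symm hp.1, Ne.symm hq.1⟩
        · convert hpq using 1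
          ext v; simp only [Finset.mem_insert, Finset.mem_singleton]; tauto
      rw [← ih.2 _ ht (by simp) (by simp)]
      exact h.c1 {w, q} _ _ (Finset.card_pair (Ne.symm hq.2)) (pairsub hwT hqT)
        (pairsub (by simp) (by simp)) hT ht (nQ q)
  exact ((main z hpath).2 T₂ h2 w2 z2).symm

lemma p2 (h : Ctx K u Q cl n) {i j : Bool} (hij : i ≠ j) {t : Finset ℕ} (hi : K.Dd u cl i t)
    (hj : K.Dd u cl j t) : t ⊆ Q := by
  obtain ⟨T, hT, ci, ht⟩ := hi
  obtain ⟨T', hT', cj, ht'⟩ := hj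
  intro x hx
  by_contra hxQ
  exact hij (by rw [← ci, ← cj]; exact h.p1 hxQ hT hT' (ht hx) (ht' hx))

lemma p3 (h : Ctx K u Q cl n) (i : Bool) {t : Finset ℕ} (ht : t ⊂ Q) : K.Dd u cl i t := by
  have h1 := Finset.card_lt_card ht
  rw [h.Qcard] at h1
  obtain ⟨e, hte, heQ, he⟩ := Finset.exists_subsuperset_card_eq ht.1 (n := 2) (by omega)
    (by rw [h.Qcard]; norm_num)
  obtain ⟨T, hT, heT, hc⟩ := h.c2 e he heQ i
  exact ⟨T, hT, hc, hte.trans heT⟩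

lemma p4 (h : Ctx K u Q cl n) {i : Bool} {t : Finset ℕ} (ht : K.Dd u cl i t) : ¬ Q ⊆ t := by
  intro hQ
  obtain ⟨T, hT, -, htT⟩ := ht
  have : Q = T := Finset.eq_of_subset_of_card_le (hQ.trans htT) (by rw [hT.2.1, h.Qcard])
  subst this
  exact h.Qnot (h.triK hT)

lemma p5 (h : Ctx K u Q cl n) {t : Finset ℕ} (hut : u ∉ t) (ht : insert u t ∈ K.faces) :
    ∃ i, K.Dd u cl i t := by
  obtain ⟨F, hF, hs, hc⟩ := h.pure ht
  have huF : u ∈ F := hs (Finset.mem_insert_self _ _)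
  refine ⟨cl (F.erase u), F.erase u, ⟨Finset.notMem_erase _ _, ?_, ?_⟩, rfl, ?_⟩
  · rw [Finset.card_erase_of_mem huF, hc]
  · rw [Finset.insert_erase huF]; exact hF
  · intro x hx
    exact Finset.mem_erase.2 ⟨fun e => hut (e ▸ hx), hs (Finset.mem_insert_of_mem hx)⟩

lemma p6u (_h : Ctx K u Q cl n) {i : Bool} {t : Finset ℕ} (ht : K.Dd u cl i t) : u ∉ t := by
  obtain ⟨T, hT, -, htT⟩ := ht
  exact fun hu => hT.1 (htT hu)

lemma p6K (_h : Ctx K u Q cl n) {i : Bool} {t : Finset ℕ} (ht : K.Dd u cl i t) :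
    insert u t ∈ K.faces := by
  obtain ⟨T, hT, -, htT⟩ := ht
  exact K.down_closed _ hT.2.2 _ (Finset.insert_subset_insert _ htT) (by simp)

lemma p6n (h : Ctx K u Q cl n) {i : Bool} (j : Bool) {t : Finset ℕ} (ht : K.Dd u cl i t) :
    n j ∉ t := fun hn => h.fresh j _ (h.p6K ht) (Finset.mem_insert_of_mem hn)

lemma p6d (_h : Ctx K u Q cl n) {i : Bool} {t t' : Finset ℕ} (ht : K.Dd u cl i t) (hs : t' ⊆ t) :
    K.Dd u cl i t' := by
  obtain ⟨T, hT, hc, htT⟩ := ht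
  exact ⟨T, hT, hc, hs.trans htT⟩

lemma p6m (h : Ctx K u Q cl n) {i : Bool} {t : Finset ℕ} (ht : K.Dd u cl i t) (hne : t ≠ ∅) :
    t ∈ K.faces := K.down_closed _ (h.p6K ht) _ (Finset.subset_insert _ _) hne

lemma p7 (h : Ctx K u Q cl n) {i : Bool} {w : ℕ} (hw : w ∉ Q) {t s : Finset ℕ}
    (ht : K.Dd u cl i t) (hwt : w ∈ t) (hws : w ∈ s) (hus : u ∉ s) (hs : insert u s ∈ K.faces) :
    K.Dd u cl i s := by
  obtain ⟨j, T', hT', cj, hs'⟩ := h.p5 hus hs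
  obtain ⟨T, hT, ci, ht'⟩ := ht
  refine ⟨T', hT', ?_, hs'⟩
  rw [← ci]
  exact h.p1 hw hT' hT (hs' hws) (ht' hwt)

lemma nQ (h : Ctx K u Q cl n) (i : Bool) : n i ∉ Q := by
  intro hn
  have : {n i} ⊂ Q := by
    refine (Finset.ssubset_iff_subset_ne).2 ⟨by simpa using hn, fun e => ?_⟩
    have := h.Qcard
    rw [← e] at this; simp at this
  exact h.fresh i _ (h.Qsub _ this) (by simp)

lemma nu (h : Ctx K u Q cl n) (i : Bool) : n i ≠ u := by
  intro e
  exact h.fresh i _ h.hu (by simp [e])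

/-- faces of the closed-up disc -/
def De (K : SComplex) (u : ℕ) (Q : Finset ℕ) (cl : Finset ℕ → Bool) (i : Bool) (t : Finset ℕ) :
    Prop := K.Dd u cl i t ∨ t = Q

lemma De_iff (h : Ctx K u Q cl n) {i : Bool} {t : Finset ℕ} :
    De K u Q cl i t ↔ K.Dd u cl i t ∨ t ⊆ Q := by
  unfold De
  constructor
  · rintro (h1 | rfl)
    · exact Or.inl h1
    · exact Or.inr (Finset.Subset.refl _)
  · rintro (h1 | h1)
    · exact Or.inl h1
    · rcases eq_or_lt_of_le (α := Finset ℕ) h1 with h2 | h2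
      · exact Or.inr h2
      · exact Or.inl (h.p3 i h2)

lemma De_n (h : Ctx K u Q cl n) {i : Bool} (j : Bool) {t : Finset ℕ} (ht : De K u Q cl i t) :
    n j ∉ t := by
  rcases ht with ht | rfl
  · exact h.p6n j ht
  · exact h.nQ j

lemma De_u (h : Ctx K u Q cl n) {i : Bool} {t : Finset ℕ} (ht : De K u Q cl i t) :
    u ∉ t := by
  rcases ht with ht | rfl
  · exact h.p6u ht
  · exact h.uQ

lemma De_d (h : Ctx K u Q cl n) {i : Bool} {t t' : Finset ℕ} (ht : De K u Q cl i t) (hs : t' ⊆ t) :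
    De K u Q cl i t' := by
  rw [h.De_iff] at *
  rcases ht with ht | ht
  · exact Or.inl (h.p6d ht hs)
  · exact Or.inr (hs.trans ht)

lemma De_small (_h : Ctx K u Q cl n) {i : Bool} {t : Finset ℕ} (ht : De K u Q cl i t)
    (hc : t.card ≤ 2) : K.Dd u cl i t := by
  rcases ht with ht | rfl
  · exact ht
  · have := _h.Qcard; omega

/-- predicate for faces of the expanded complex -/
def PM (K : SComplex) (u : ℕ) (Q : Finset ℕ) (cl : Finset ℕ → Bool) (n : Bool → ℕ)
    (s : Finset ℕ) : Prop :=
  (s ∈ K.faces ∧ u ∉ s) ∨ (∃ i t, K.Dd u cl i t ∧ s = insert (n i) t) ∨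
    ∃ t, t ⊂ Q ∧ s = insert (n true) (insert (n false) t)

/-- predicate for faces of the final complex -/
def PN (K : SComplex) (u : ℕ) (Q : Finset ℕ) (cl : Finset ℕ → Bool) (n : Bool → ℕ)
    (s : Finset ℕ) : Prop :=
  (s ∈ K.faces ∧ u ∉ s) ∨ s = Q ∨ ∃ i t, De K u Q cl i t ∧ s = insert (n i) t

end Ctx

open Classical in
/-- complex from a predicate -/
noncomputable def ofPred (V : Finset ℕ) (P : Finset ℕ → Prop)
    (hP : ∀ s, P s → ∀ t ⊆ s, t ≠ ∅ → P t) : SComplex where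
  faces := V.powerset.filter fun s => s ≠ ∅ ∧ P s
  not_empty_mem := by simp
  down_closed := by
    intro s hs t hts ht
    simp only [Finset.mem_filter, Finset.mem_powerset] at hs ⊢
    exact ⟨hts.trans hs.1, ht, hP s hs.2.2 t hts ht⟩

lemma mem_ofPred' {V : Finset ℕ} {P : Finset ℕ → Prop}
    {hP : ∀ s, P s → ∀ t ⊆ s, t ≠ ∅ → P t} (hV : ∀ s, P s → s ⊆ V) {s : Finset ℕ} :
    s ∈ (ofPred V P hP).faces ↔ s ≠ ∅ ∧ P s := by
  simp only [ofPred, Finset.mem_filter, Finset.mem_powerset]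
  exact ⟨fun h => h.2, fun h => ⟨hV s h.2, h⟩⟩

lemma sub_insert_cases {s t : Finset ℕ} {x : ℕ} (h : s ⊆ insert x t) (_hx : x ∉ t) :
    s ⊆ t ∨ ∃ t' ⊆ t, s = insert x t' := by
  by_cases hxs : x ∈ s
  · right
    refine ⟨s.erase x, ?_, (Finset.insert_erase hxs).symm⟩
    intro y hy
    have := h (Finset.mem_of_mem_erase hy)
    rw [Finset.mem_insert] at this
    exact this.resolve_left (Finset.ne_of_mem_erase hy)
  · left
    exact (Finset.subset_insert_iff_of_notMem hxs).1 h

namespace Ctx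
variable {K : SComplex} {u : ℕ} {Q : Finset ℕ} {cl : Finset ℕ → Bool} {n : Bool → ℕ}

lemma old_d (_h : Ctx K u Q cl n) {s t : Finset ℕ} (hs : s ∈ K.faces ∧ u ∉ s) (ht : t ⊆ s)
    (hne : t ≠ ∅) : t ∈ K.faces ∧ u ∉ t := ⟨K.down_closed s hs.1 t ht hne, fun e => hs.2 (ht e)⟩

lemma Dd_old (h : Ctx K u Q cl n) {i : Bool} {t : Finset ℕ} (ht : K.Dd u cl i t) (hne : t ≠ ∅) :
    t ∈ K.faces ∧ u ∉ t := ⟨h.p6m ht hne, h.p6u ht⟩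

lemma PM_d (h : Ctx K u Q cl n) : ∀ s, PM K u Q cl n s → ∀ t ⊆ s, t ≠ ∅ → PM K u Q cl n t := by
  rintro s (hs | ⟨i, t, ht, rfl⟩ | ⟨t, ht, rfl⟩) r hr hne
  · exact Or.inl (h.old_d hs hr hne)
  · rcases sub_insert_cases hr (h.p6n i ht) with h1 | ⟨t', h1, rfl⟩
    · exact Or.inl (h.Dd_old (h.p6d ht h1) hne)
    · exact Or.inr (Or.inl ⟨i, t', h.p6d ht h1, rfl⟩)
  · have hf := h.nQ false
    have ht' := h.nQ true
    rcases sub_insert_cases hr (by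
        simp only [Finset.mem_insert, not_or]
        exact ⟨h.ninj, fun e => ht' (ht.1 e)⟩) with h1 | ⟨t', h1, rfl⟩
    · rcases sub_insert_cases h1 (fun e => hf (ht.1 e)) with h2 | ⟨t'', h2, rfl⟩
      · exact Or.inl (h.Dd_old (h.p3 true (lt_of_le_of_lt h2 ht)) hne)
      · exact Or.inr (Or.inl ⟨false, t'', h.p3 _ (lt_of_le_of_lt h2 ht), rfl⟩)
    · rcases sub_insert_cases h1 (fun e => hf (ht.1 e)) with h2 | ⟨t'', h2, rfl⟩
      · exact Or.inr (Or.inl ⟨true, t', h.p3 _ (lt_of_le_of_lt h2 ht), rfl⟩)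
      · exact Or.inr (Or.inr ⟨t'', lt_of_le_of_lt h2 ht, rfl⟩)

lemma PN_d (h : Ctx K u Q cl n) : ∀ s, PN K u Q cl n s → ∀ t ⊆ s, t ≠ ∅ → PN K u Q cl n t := by
  have small : ∀ i t, De K u Q cl i t → t ≠ ∅ → PN K u Q cl n t := by
    rintro i t (ht | rfl) hne
    · exact Or.inl (h.Dd_old ht hne)
    · exact Or.inr (Or.inl rfl)
  rintro s (hs | rfl | ⟨i, t, ht, rfl⟩) r hr hne
  · exact Or.inl (h.old_d hs hr hne)
  · exact small true r (h.De_iff.2 (Or.inr hr)) hne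
  · rcases sub_insert_cases hr (h.De_n i ht) with h1 | ⟨t', h1, rfl⟩
    · exact small i r (h.De_d ht h1) hne
    · exact Or.inr (Or.inr ⟨i, t', h.De_d ht h1, rfl⟩)

/-- ambient vertex set -/
def amb (K : SComplex) (n : Bool → ℕ) : Finset ℕ :=
  insert (n true) (insert (n false) K.vertexSet)

lemma sub_vertexSet {s : Finset ℕ} (hs : s ∈ K.faces) : s ⊆ K.vertexSet :=
  Finset.le_sup (f := id) hs

lemma K_amb {s : Finset ℕ} (hs : s ∈ K.faces) : s ⊆ amb K n :=
  (sub_vertexSet hs).trans ((Finset.subset_insert _ _).trans (Finset.subset_insert _ _))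

lemma n_amb (i : Bool) : n i ∈ amb K n := by
  cases i <;> simp [amb]

lemma Q_amb (h : Ctx K u Q cl n) : Q ⊆ amb K n := by
  intro x hx
  have : {x} ⊂ Q := by
    refine (Finset.ssubset_iff_subset_ne).2 ⟨by simpa using hx, fun e => ?_⟩
    have := h.Qcard
    rw [← e] at this; simp at this
  exact K_amb (h.Qsub _ this) (by simp)

lemma PM_amb (h : Ctx K u Q cl n) : ∀ s, PM K u Q cl n s → s ⊆ amb K n := by
  rintro s (hs | ⟨i, t, ht, rfl⟩ | ⟨t, ht, rfl⟩)
  · exact K_amb hs.1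
  · exact Finset.insert_subset (n_amb i) ((Finset.subset_insert _ _).trans (K_amb (h.p6K ht)))
  · exact Finset.insert_subset (n_amb _) (Finset.insert_subset (n_amb _) (ht.1.trans h.Q_amb))

lemma PN_amb (h : Ctx K u Q cl n) : ∀ s, PN K u Q cl n s → s ⊆ amb K n := by
  rintro s (hs | rfl | ⟨i, t, ht | rfl, rfl⟩)
  · exact K_amb hs.1
  · exact h.Q_amb
  · exact Finset.insert_subset (n_amb i) ((Finset.subset_insert _ _).trans (K_amb (h.p6K ht)))
  · exact Finset.insert_subset (n_amb i) h.Q_amb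

noncomputable def M (h : Ctx K u Q cl n) : SComplex := ofPred (amb K n) (PM K u Q cl n) h.PM_d
noncomputable def N (h : Ctx K u Q cl n) : SComplex := ofPred (amb K n) (PN K u Q cl n) h.PN_d

lemma memM (h : Ctx K u Q cl n) {s : Finset ℕ} : s ∈ h.M.faces ↔ s ≠ ∅ ∧ PM K u Q cl n s :=
  mem_ofPred' h.PM_amb
lemma memN (h : Ctx K u Q cl n) {s : Finset ℕ} : s ∈ h.N.faces ↔ s ≠ ∅ ∧ PN K u Q cl n s :=
  mem_ofPred' h.PN_amb

lemma Kne (_h : Ctx K u Q cl n) {s : Finset ℕ} (hs : s ∈ K.faces) : s ≠ ∅ :=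
  fun e => K.not_empty_mem (e ▸ hs)

lemma Qne (h : Ctx K u Q cl n) : Q ≠ ∅ := by
  intro e; have := h.Qcard; rw [e] at this; simp at this

lemma N_old (h : Ctx K u Q cl n) {s : Finset ℕ} (hs : ∀ i, n i ∉ s) :
    s ∈ h.N.faces ↔ (s ∈ K.faces ∧ u ∉ s) ∨ s = Q := by
  rw [h.memN]
  constructor
  · rintro ⟨-, h1 | h1 | ⟨i, t, -, rfl⟩⟩
    · exact Or.inl h1
    · exact Or.inr h1
    · exact (hs i (by simp)).elim
  · rintro (h1 | rfl)
    · exact ⟨h.Kne h1.1, Or.inl h1⟩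
    · exact ⟨h.Qne, Or.inr (Or.inl rfl)⟩

lemma N_new (h : Ctx K u Q cl n) {i : Bool} {t : Finset ℕ} (ht : n i ∉ t) :
    insert (n i) t ∈ h.N.faces ↔ De K u Q cl i t := by
  rw [h.memN]
  constructor
  · rintro ⟨-, h1 | h1 | ⟨j, t', hD, he⟩⟩
    · exact (h.fresh i _ h1.1 (by simp)).elim
    · exact (h.nQ i (h1 ▸ (by simp))).elim
    · have h1 : n i ∈ insert (n j) t' := he ▸ (by simp)
      rw [Finset.mem_insert] at h1
      have h2 := h.inj (h1.resolve_right (h.De_n i hD))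
      subst h2
      have : t = t' := by
        rw [← Finset.erase_insert ht, he, Finset.erase_insert (h.De_n i hD)]
      rw [this]; exact hD
  · intro hD
    exact ⟨by simp, Or.inr (Or.inr ⟨i, t, hD, rfl⟩)⟩

end Ctx
end SComplex

namespace SComplex
namespace Ctx
variable {K : SComplex} {u : ℕ} {Q : Finset ℕ} {cl : Finset ℕ → Bool} {n : Bool → ℕ}

/-- the lift of a facet -/
def lift (u : ℕ) (cl : Finset ℕ → Bool) (n : Bool → ℕ) (F : Finset ℕ) : Finset ℕ :=
  if u ∈ F then insert (n (cl (F.erase u))) (F.erase u) else F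

lemma tri_erase (_h : Ctx K u Q cl n) {F : Finset ℕ} (hF : F ∈ K.faces) (hc : F.card = 4)
    (hu : u ∈ F) : K.Tri u (F.erase u) :=
  ⟨Finset.notMem_erase _ _, by rw [Finset.card_erase_of_mem hu, hc],
    by rw [Finset.insert_erase hu]; exact hF⟩

/-- triangles of the closed-up discs -/
def DT (K : SComplex) (u : ℕ) (Q : Finset ℕ) (cl : Finset ℕ → Bool) (i : Bool) (T : Finset ℕ) :
    Prop := (K.Tri u T ∧ cl T = i) ∨ T = Q

lemma DT_De (_h : Ctx K u Q cl n) {i : Bool} {T : Finset ℕ} (hT : DT K u Q cl i T) :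
    De K u Q cl i T := by
  rcases hT with hT | rfl
  · exact Or.inl ⟨T, hT.1, hT.2, Finset.Subset.refl _⟩
  · exact Or.inr rfl

lemma De_DT (_h : Ctx K u Q cl n) {i : Bool} {T : Finset ℕ} (hT : De K u Q cl i T)
    (hc : T.card = 3) : DT K u Q cl i T := by
  rcases hT with ⟨T', hT', hi, hs⟩ | rfl
  · have : T = T' := Finset.eq_of_subset_of_card_le hs (by rw [hT'.2.1, hc])
    subst this
    exact Or.inl ⟨hT', hi⟩
  · exact Or.inr rfl

lemma DT_card (h : Ctx K u Q cl n) {i : Bool} {T : Finset ℕ} (hT : DT K u Q cl i T) :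
    T.card = 3 := by
  rcases hT with hT | rfl
  · exact hT.1.2.1
  · exact h.Qcard

lemma DT_n (h : Ctx K u Q cl n) {i : Bool} {T : Finset ℕ} (hT : DT K u Q cl i T) (j : Bool) :
    n j ∉ T := h.De_n j (h.DT_De hT)

lemma De_ext (h : Ctx K u Q cl n) {i : Bool} {t : Finset ℕ} (ht : De K u Q cl i t) :
    ∃ T, DT K u Q cl i T ∧ t ⊆ T := by
  rcases ht with ⟨T', hT', hi, hs⟩ | rfl
  · exact ⟨T', Or.inl ⟨hT', hi⟩, hs⟩
  · exact ⟨_, Or.inr rfl, Finset.Subset.refl _⟩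

/-- the 4-element faces of `N` -/
lemma N_four (h : Ctx K u Q cl n) {F : Finset ℕ} : (F ∈ h.N.faces ∧ F.card = 4) ↔
    (F ∈ K.faces ∧ F.card = 4 ∧ u ∉ F) ∨ ∃ i T, DT K u Q cl i T ∧ F = insert (n i) T := by
  rw [h.memN]
  constructor
  · rintro ⟨⟨-, h1 | h1 | ⟨i, t, hD, rfl⟩⟩, hc⟩
    · exact Or.inl ⟨h1.1, hc, h1.2⟩
    · rw [h1, h.Qcard] at hc; omega
    · rw [Finset.card_insert_of_notMem (h.De_n i hD)] at hc
      exact Or.inr ⟨i, t, h.De_DT hD (by omega), rfl⟩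
  · rintro (h1 | ⟨i, T, hD, rfl⟩)
    · exact ⟨⟨h.Kne h1.1, Or.inl ⟨h1.1, h1.2.2⟩⟩, h1.2.1⟩
    · refine ⟨⟨by simp, Or.inr (Or.inr ⟨i, T, h.DT_De hD, rfl⟩)⟩, ?_⟩
      rw [Finset.card_insert_of_notMem (h.DT_n hD i), h.DT_card hD]

lemma lift_N (h : Ctx K u Q cl n) {F : Finset ℕ} (hF : F ∈ K.faces) (hc : F.card = 4) :
    lift u cl n F ∈ h.N.faces ∧ (lift u cl n F).card = 4 := by
  rw [h.N_four]
  unfold lift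
  split_ifs with hu
  · exact Or.inr ⟨_, _, Or.inl ⟨h.tri_erase hF hc hu, rfl⟩, rfl⟩
  · exact Or.inl ⟨hF, hc, hu⟩

/-- the 4-element faces of `N`, via lifts -/
lemma N_four' (h : Ctx K u Q cl n) {F : Finset ℕ} : (F ∈ h.N.faces ∧ F.card = 4) ↔
    (∃ G ∈ K.faces, G.card = 4 ∧ F = lift u cl n G) ∨ ∃ i, F = insert (n i) Q := by
  constructor
  · intro hF
    rw [h.N_four] at hF
    rcases hF with h1 | ⟨i, T, ⟨hT, rfl⟩ | rfl, rfl⟩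
    · exact Or.inl ⟨F, h1.1, h1.2.1, by unfold lift; rw [if_neg h1.2.2]⟩
    · refine Or.inl ⟨insert u T, hT.2.2, ?_, ?_⟩
      · rw [Finset.card_insert_of_notMem hT.1, hT.2.1]
      · unfold lift; rw [if_pos (by simp), Finset.erase_insert hT.1]
    · exact Or.inr ⟨i, rfl⟩
  · rintro (⟨G, hG, hc, rfl⟩ | ⟨i, rfl⟩)
    · exact h.lift_N hG hc
    · exact h.N_four.2 (Or.inr ⟨i, _, Or.inr rfl, rfl⟩)

lemma sub_lift (_h : Ctx K u Q cl n) {r F : Finset ℕ} (hr : ∀ i, n i ∉ r) (hu : u ∉ r) :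
    r ⊆ lift u cl n F ↔ r ⊆ F := by
  unfold lift
  split_ifs with huF
  · rw [Finset.subset_insert_iff_of_notMem (hr _)]
    constructor
    · intro h1; exact h1.trans (Finset.erase_subset _ _)
    · intro h1 x hx
      exact Finset.mem_erase.2 ⟨fun e => hu (e ▸ hx), h1 hx⟩
  · rfl

lemma lift_inj (h : Ctx K u Q cl n) {F G : Finset ℕ} (hF : F ∈ K.faces) (hG : G ∈ K.faces)
    (e : lift u cl n F = lift u cl n G) : F = G := by
  unfold lift at e
  have key : ∀ H ∈ K.faces, ∀ j i, n i ∉ H.erase j := fun H hH j i hn =>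
    h.fresh i H hH (Finset.mem_of_mem_erase hn)
  split_ifs at e with h1 h2 h2
  · have : n (cl (F.erase u)) ∈ insert (n (cl (G.erase u))) (G.erase u) := e ▸ (by simp)
    rw [Finset.mem_insert] at this
    have h3 := this.resolve_right (key G hG _ _)
    rw [h3] at e
    have h4 : F.erase u = G.erase u := by
      rw [← Finset.erase_insert (key F hF u _), e, Finset.erase_insert (key G hG u _)]
    rw [← Finset.insert_erase h1, h4, Finset.insert_erase h2]
  · exact (h.fresh (cl (F.erase u)) G hG (by rw [← e]; simp)).elim
  · exact (h.fresh (cl (G.erase u)) F hF (by rw [e]; simp)).elim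
  · exact e

lemma old_n (h : Ctx K u Q cl n) {s : Finset ℕ} (hs : s ∈ K.faces) (i : Bool) : n i ∉ s :=
  h.fresh i s hs

lemma N_pure (h : Ctx K u Q cl n) : h.N.IsPure 3 := by
  rw [pure_iff]
  refine ⟨⟨Q, (h.N_old h.nQ).2 (Or.inr rfl)⟩, fun s hs => ?_⟩
  rw [h.memN] at hs
  rcases hs with ⟨-, h1 | rfl | ⟨i, t, hD, rfl⟩⟩
  · obtain ⟨F, hF, hsF, hc⟩ := h.pure h1.1
    have := h.lift_N hF hc
    exact ⟨_, this.1, (h.sub_lift (h.old_n h1.1) h1.2).2 hsF, this.2⟩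
  · have := h.N_four.2 (Or.inr ⟨true, _, Or.inr rfl, rfl⟩)
    exact ⟨_, this.1, Finset.subset_insert _ _, this.2⟩
  · obtain ⟨T, hT, hs⟩ := h.De_ext hD
    have := h.N_four.2 (Or.inr ⟨i, T, hT, rfl⟩)
    exact ⟨_, this.1, Finset.insert_subset_insert _ hs, this.2⟩

lemma new_sub (h : Ctx K u Q cl n) {i : Bool} {e H : Finset ℕ} (he : De K u Q cl i e) :
    (H ∈ h.N.faces ∧ H.card = 4 ∧ insert (n i) e ⊆ H) ↔
      ∃ T, DT K u Q cl i T ∧ e ⊆ T ∧ H = insert (n i) T := by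
  rw [← and_assoc, h.N_four]
  constructor
  · rintro ⟨h1 | ⟨j, T, hT, rfl⟩, h2⟩
    · exact (h.fresh i _ h1.1 (h2 (by simp))).elim
    · have h3 : n i ∈ insert (n j) T := h2 (by simp)
      rw [Finset.mem_insert] at h3
      have h4 := h.inj (h3.resolve_right (h.DT_n hT i))
      subst h4
      refine ⟨T, hT, ?_, rfl⟩
      intro x hx
      have h5 := h2 (Finset.mem_insert_of_mem hx)
      rw [Finset.mem_insert] at h5
      refine h5.resolve_left fun e1 => h.De_n i he (e1 ▸ hx)
  · rintro ⟨T, hT, hs, rfl⟩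
    exact ⟨Or.inr ⟨i, T, hT, rfl⟩, Finset.insert_subset_insert _ hs⟩

lemma two_DT (h : Ctx K u Q cl n) {i : Bool} {e : Finset ℕ} (he : De K u Q cl i e)
    (hc : e.card = 2) : ∃ T₁ T₂, T₁ ≠ T₂ ∧ ∀ T, (DT K u Q cl i T ∧ e ⊆ T) ↔ T = T₁ ∨ T = T₂ := by
  by_cases heQ : e ⊆ Q
  · obtain ⟨T, hT, heT, hcl⟩ := h.c2 e hc heQ i
    refine ⟨T, Q, ?_, fun T' => ⟨?_, ?_⟩⟩
    · rintro rfl; exact h.Qnot (h.triK hT)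
    · rintro ⟨⟨h1, h2⟩ | h1, h3⟩
      · exact Or.inl (h.c3 e _ _ hc h3 heT h1 hT heQ (by rw [h2, hcl]))
      · exact Or.inr h1
    · rintro (rfl | rfl)
      · exact ⟨Or.inl ⟨hT, hcl⟩, heT⟩
      · exact ⟨Or.inr rfl, heQ⟩
  · have hD := h.De_small he (by omega)
    have hue := h.De_u he
    obtain ⟨F, G, hFG, hH⟩ := h.two (h.p6K hD) (by rw [Finset.card_insert_of_notMem hue, hc])
    obtain ⟨T0, hT0, hcl0, heT0⟩ := hD
    have uF : u ∈ F := ((hH F).2 (Or.inl rfl)).2.2 (by simp)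
    have uG : u ∈ G := ((hH G).2 (Or.inr rfl)).2.2 (by simp)
    refine ⟨F.erase u, G.erase u, ?_, fun T => ⟨?_, ?_⟩⟩
    · intro e1
      exact hFG (by rw [← Finset.insert_erase uF, e1, Finset.insert_erase uG])
    · rintro ⟨⟨h1, -⟩ | rfl, h3⟩
      · have := (hH (insert u T)).1 ⟨h1.2.2, by rw [Finset.card_insert_of_notMem h1.1, h1.2.1],
          Finset.insert_subset_insert _ h3⟩
        rcases this with rfl | rfl
        · left; rw [Finset.erase_insert h1.1]
        · right; rw [Finset.erase_insert h1.1]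
      · exact (heQ h3).elim
    · have key : ∀ H, H = F ∨ H = G → DT K u Q cl i (H.erase u) ∧ e ⊆ H.erase u := by
        intro H hH'
        obtain ⟨a1, a2, a3⟩ := (hH H).2 hH'
        have ht := h.tri_erase a1 a2 (a3 (by simp))
        have hs : e ⊆ H.erase u := fun x hx => Finset.mem_erase.2
          ⟨fun e1 => hue (e1 ▸ hx), a3 (Finset.mem_insert_of_mem hx)⟩
        exact ⟨Or.inl ⟨ht, by rw [← hcl0]; exact h.c1 e _ _ hc hs heT0 ht hT0 heQ⟩, hs⟩
      rintro (rfl | rfl)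
      · exact key F (Or.inl rfl)
      · exact key G (Or.inr rfl)

lemma N_two (h : Ctx K u Q cl n) {r : Finset ℕ} (hr : r ∈ h.N.faces) (hc : r.card = 3) :
    ∃ F G, F ≠ G ∧ ∀ H, (H ∈ h.N.faces ∧ H.card = 4 ∧ r ⊆ H) ↔ H = F ∨ H = G := by
  rw [h.memN] at hr
  rcases hr with ⟨-, h1 | rfl | ⟨i, e, hD, rfl⟩⟩
  · obtain ⟨F, G, hFG, hH⟩ := h.two h1.1 hc
    have aF := (hH F).2 (Or.inl rfl)
    have aG := (hH G).2 (Or.inr rfl)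
    refine ⟨lift u cl n F, lift u cl n G, fun e => hFG (h.lift_inj aF.1 aG.1 e), fun H => ⟨?_, ?_⟩⟩
    · rintro ⟨h2, h3, h4⟩
      rcases h.N_four'.1 ⟨h2, h3⟩ with ⟨H', b1, b2, rfl⟩ | ⟨i, rfl⟩
      · rw [h.sub_lift (h.old_n h1.1) h1.2] at h4
        rcases (hH H').1 ⟨b1, b2, h4⟩ with rfl | rfl
        · exact Or.inl rfl
        · exact Or.inr rfl
      · rw [Finset.subset_insert_iff_of_notMem (h.old_n h1.1 i)] at h4
        have : r = Q := Finset.eq_of_subset_of_card_le h4 (by rw [hc, h.Qcard])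
        exact (h.Qnot (this ▸ h1.1)).elim
    · rintro (rfl | rfl)
      · have := h.lift_N aF.1 aF.2.1
        exact ⟨this.1, this.2, (h.sub_lift (h.old_n h1.1) h1.2).2 aF.2.2⟩
      · have := h.lift_N aG.1 aG.2.1
        exact ⟨this.1, this.2, (h.sub_lift (h.old_n h1.1) h1.2).2 aG.2.2⟩
  · refine ⟨insert (n true) r, insert (n false) r, ?_, fun H => ⟨?_, ?_⟩⟩
    · intro e
      have : n true ∈ insert (n false) r := e ▸ (by simp)
      rw [Finset.mem_insert] at this
      exact this.elim h.ninj (h.nQ true)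
    · rintro ⟨h2, h3, h4⟩
      rcases h.N_four.1 ⟨h2, h3⟩ with h5 | ⟨i, T, hT, rfl⟩
      · exact (h.Qnot (K.down_closed _ h5.1 _ h4 h.Qne)).elim
      · rw [Finset.subset_insert_iff_of_notMem (h.nQ i)] at h4
        have : r = T := Finset.eq_of_subset_of_card_le h4 (by rw [hc, h.DT_card hT])
        subst this
        cases i
        · exact Or.inr rfl
        · exact Or.inl rfl
    · have key : ∀ i, insert (n i) r ∈ h.N.faces ∧ (insert (n i) r).card = 4 ∧
          r ⊆ insert (n i) r := fun i => by
        have := h.N_four.2 (Or.inr ⟨i, r, Or.inr rfl, rfl⟩)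
        exact ⟨this.1, this.2, Finset.subset_insert _ _⟩
      rintro (rfl | rfl)
      · exact key _
      · exact key _
  · rw [Finset.card_insert_of_notMem (h.De_n i hD)] at hc
    obtain ⟨T₁, T₂, hne, hT⟩ := h.two_DT hD (by omega)
    have a1 := (hT T₁).2 (Or.inl rfl)
    have a2 := (hT T₂).2 (Or.inr rfl)
    refine ⟨insert (n i) T₁, insert (n i) T₂, ?_, fun H => ?_⟩
    · intro e1
      apply hne
      rw [← Finset.erase_insert (h.DT_n a1.1 i), e1, Finset.erase_insert (h.DT_n a2.1 i)]
    · rw [h.new_sub hD]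
      constructor
      · rintro ⟨T, b1, b2, rfl⟩
        rcases (hT T).1 ⟨b1, b2⟩ with rfl | rfl
        · exact Or.inl rfl
        · exact Or.inr rfl
      · rintro (rfl | rfl)
        · exact ⟨T₁, a1.1, a1.2, rfl⟩
        · exact ⟨T₂, a2.1, a2.2, rfl⟩

/-- two 4-faces of `N` sharing a 3-face are connected -/
lemma N_share (h : Ctx K u Q cl n) {F G r : Finset ℕ} (hF : F ∈ h.N.faces ∧ F.card = 4)
    (hG : G ∈ h.N.faces ∧ G.card = 4) (hr : r.card = 3) (rF : r ⊆ F) (rG : r ⊆ G) :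
    Relation.ReflTransGen h.N.FacetAdj F G := by
  by_cases e : F = G
  · subst e; exact Relation.ReflTransGen.refl
  refine Relation.ReflTransGen.single ⟨(facet_iff h.N_pure).2 hF, (facet_iff h.N_pure).2 hG, ?_⟩
  have h1 : 3 ≤ (F ∩ G).card := by
    rw [← hr]; exact Finset.card_le_card (Finset.subset_inter rF rG)
  have h2 : (F ∩ G).card < 4 := by
    by_contra h3
    apply e
    have h4 : F ∩ G = F := Finset.eq_of_subset_of_card_le Finset.inter_subset_left (by omega)
    have h5 : F ∩ G = G := Finset.eq_of_subset_of_card_le Finset.inter_subset_right (by omega)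
    rw [← h4]; exact h5
  omega

lemma NQ (h : Ctx K u Q cl n) (i : Bool) :
    insert (n i) Q ∈ h.N.faces ∧ (insert (n i) Q).card = 4 :=
  h.N_four.2 (Or.inr ⟨i, Q, Or.inr rfl, rfl⟩)

lemma Nlift_share (h : Ctx K u Q cl n) {F G : Finset ℕ} (hF : F ∈ K.faces) (cF : F.card = 4)
    (hG : G ∈ K.faces) (cG : G.card = 4) {r : Finset ℕ} (hr : r.card = 3) (rF : r ⊆ F)
    (rG : r ⊆ G) : Relation.ReflTransGen h.N.FacetAdj (lift u cl n F) (lift u cl n G) := by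
  have lF := h.lift_N hF cF
  have lG := h.lift_N hG cG
  by_cases hu : u ∈ r
  · have uF := rF hu
    have uG := rG hu
    set e := r.erase u with he
    have ce : e.card = 2 := by rw [he, Finset.card_erase_of_mem hu, hr]
    have eF : e ⊆ F.erase u := Finset.erase_subset_erase _ rF
    have eG : e ⊆ G.erase u := Finset.erase_subset_erase _ rG
    have tF := h.tri_erase hF cF uF
    have tG := h.tri_erase hG cG uG
    have hn : ∀ i, n i ∉ e := fun i hi => h.fresh i F hF (Finset.mem_of_mem_erase (eF hi))
    have cn : ∀ i, (insert (n i) e).card = 3 := fun i => by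
      rw [Finset.card_insert_of_notMem (hn i), ce]
    have eqF : lift u cl n F = insert (n (cl (F.erase u))) (F.erase u) := by
      unfold lift; rw [if_pos uF]
    have eqG : lift u cl n G = insert (n (cl (G.erase u))) (G.erase u) := by
      unfold lift; rw [if_pos uG]
    rw [eqF] at lF ⊢
    rw [eqG] at lG ⊢
    by_cases hcl : cl (F.erase u) = cl (G.erase u)
    · rw [← hcl] at lG ⊢
      exact h.N_share lF lG (cn _) (Finset.insert_subset_insert _ eF)
        (Finset.insert_subset_insert _ eG)
    · have eQ : e ⊆ Q := by
        by_contra hq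
        exact hcl (h.c1 e _ _ ce eF eG tF tG hq)
      refine (h.N_share lF (h.NQ _) (cn _) (Finset.insert_subset_insert _ eF)
        (Finset.insert_subset_insert _ eQ)).trans ?_
      refine (h.N_share (h.NQ _) (h.NQ (cl (G.erase u))) h.Qcard (Finset.subset_insert _ _)
        (Finset.subset_insert _ _)).trans ?_
      exact h.N_share (h.NQ _) lG (cn _) (Finset.insert_subset_insert _ eQ)
        (Finset.insert_subset_insert _ eG)
  · have hn : ∀ i, n i ∉ r := fun i hi => h.fresh i F hF (rF hi)
    exact h.N_share lF lG hr ((h.sub_lift hn hu).2 rF) ((h.sub_lift hn hu).2 rG)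

lemma Nlift_conn (h : Ctx K u Q cl n) {F G : Finset ℕ} (hF : F ∈ K.faces) (cF : F.card = 4)
    (hG : G ∈ K.faces) (cG : G.card = 4) :
    Relation.ReflTransGen h.N.FacetAdj (lift u cl n F) (lift u cl n G) := by
  have hp := h.npm.2.1 F G ((facet_iff h.npm.1).2 ⟨hF, cF⟩) ((facet_iff h.npm.1).2 ⟨hG, cG⟩)
  clear hG cG
  induction hp with
  | refl => exact Relation.ReflTransGen.refl
  | tail _ hadj ih =>
    obtain ⟨h1, h2, h3⟩ := hadj
    rw [facet_iff h.npm.1] at h1 h2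
    exact ih.trans (h.Nlift_share h1.1 h1.2 h2.1 h2.2 (r := _ ∩ _) (by omega)
      Finset.inter_subset_left Finset.inter_subset_right)

lemma N_to_lift (h : Ctx K u Q cl n) {F : Finset ℕ} (hF : F ∈ h.N.faces ∧ F.card = 4) :
    ∃ G ∈ K.faces, G.card = 4 ∧ Relation.ReflTransGen h.N.FacetAdj F (lift u cl n G) ∧
      Relation.ReflTransGen h.N.FacetAdj (lift u cl n G) F := by
  rcases h.N_four'.1 hF with ⟨G, h1, h2, rfl⟩ | ⟨i, rfl⟩
  · exact ⟨G, h1, h2, Relation.ReflTransGen.refl, Relation.ReflTransGen.refl⟩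
  · obtain ⟨e, heQ, hc⟩ := Finset.exists_subset_card_eq (s := Q) (n := 2) (by rw [h.Qcard]; omega)
    obtain ⟨T, hT, heT, hcl⟩ := h.c2 e hc heQ i
    have c4 : (insert u T).card = 4 := by rw [Finset.card_insert_of_notMem hT.1, hT.2.1]
    have hl := h.lift_N hT.2.2 c4
    have eq : lift u cl n (insert u T) = insert (n i) T := by
      unfold lift; rw [if_pos (by simp), Finset.erase_insert hT.1, hcl]
    have cn : (insert (n i) e).card = 3 := by
      rw [Finset.card_insert_of_notMem (fun hi => h.nQ i (heQ hi)), hc]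
    refine ⟨insert u T, hT.2.2, c4, h.N_share hF hl cn (Finset.insert_subset_insert _ heQ) ?_,
      h.N_share hl hF cn ?_ (Finset.insert_subset_insert _ heQ)⟩ <;>
    · rw [eq]; exact Finset.insert_subset_insert _ heT

lemma N_strong (h : Ctx K u Q cl n) : h.N.StronglyConnected := by
  intro F G hF hG
  rw [facet_iff h.N_pure] at hF hG
  obtain ⟨F', f1, f2, f3, -⟩ := h.N_to_lift hF
  obtain ⟨G', g1, g2, -, g3⟩ := h.N_to_lift hG
  exact (f3.trans (h.Nlift_conn f1 f2 g1 g2)).trans g3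

end Ctx
end SComplex

namespace SComplex

lemma lk_vertex {K : SComplex} (hK : K.IsPure 3) {s : Finset ℕ} (hs : s ∈ K.faces)
    (hc : s.card ≤ 2) : ∃ x, x ∉ s ∧ insert x s ∈ K.faces := by
  obtain ⟨F, hF, hsF, hcF⟩ := (K.pure_iff.1 hK).2 s hs
  obtain ⟨x, hx, hxs⟩ := Finset.exists_mem_notMem_of_card_lt_card (s := s) (t := F) (by omega)
  exact ⟨x, hxs, K.down_closed F hF _ (Finset.insert_subset hx hsF) (by simp)⟩

lemma LAdj.rsymm {K : SComplex} {s : Finset ℕ} {x y : ℕ}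
    (h : Relation.ReflTransGen (K.LAdj s) x y) : Relation.ReflTransGen (K.LAdj s) y x := by
  induction h with
  | refl => exact Relation.ReflTransGen.refl
  | tail _ hadj ih => exact Relation.ReflTransGen.head hadj.symm ih

namespace Ctx
variable {K : SComplex} {u : ℕ} {Q : Finset ℕ} {cl : Finset ℕ → Bool} {n : Bool → ℕ}

/-- vertex lifts -/
def Lf (K : SComplex) (u : ℕ) (cl : Finset ℕ → Bool) (n : Bool → ℕ) (s : Finset ℕ)
    (x x' : ℕ) : Prop :=
  (x ≠ u ∧ x' = x) ∨ (x = u ∧ ∃ i, x' = n i ∧ K.Dd u cl i s)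

lemma lk_a (h : Ctx K u Q cl n) {s : Finset ℕ} (hc : s.card ≤ 2) {i j : Bool}
    (hi : K.Dd u cl i s) (hj : K.Dd u cl j s) :
    Relation.ReflTransGen (h.N.LAdj s) (n i) (n j) := by
  by_cases hij : i = j
  · subst hij; exact Relation.ReflTransGen.refl
  have hsQ := h.p2 hij hi hj
  obtain ⟨t, ht, hts⟩ := Finset.exists_mem_notMem_of_card_lt_card (s := s) (t := Q)
    (by rw [h.Qcard]; omega)
  have hsub : insert t s ⊆ Q := Finset.insert_subset ht hsQ
  have key : ∀ k, h.N.LAdj s (n k) t := fun k =>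
    ⟨fun e => h.nQ k (hsQ e), hts,
      (h.N_new (fun e => h.nQ k (hsub e))).2 (h.De_iff.2 (Or.inr hsub))⟩
  exact (Relation.ReflTransGen.single (key i)).tail (key j).symm

lemma lk_b0 (h : Ctx K u Q cl n) {s : Finset ℕ} (hc : s.card ≤ 2) (hus : u ∉ s)
    {i : Bool} (hi : K.Dd u cl i s) {y : ℕ} (hyu : y ≠ u) (hadj : K.LAdj s u y) :
    Relation.ReflTransGen (h.N.LAdj s) (n i) y := by
  obtain ⟨-, hy, hF⟩ := hadj
  obtain ⟨j, hj⟩ := h.p5 (t := insert y s) (by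
    simp only [Finset.mem_insert, not_or]; exact ⟨hyu.symm, hus⟩) hF
  have hj' := h.p6d hj (Finset.subset_insert y s)
  refine (h.lk_a hc hi hj').tail ⟨h.p6n j hj', hy, (h.N_new (h.p6n j hj)).2 (Or.inl hj)⟩

lemma lk_b (h : Ctx K u Q cl n) {s : Finset ℕ} (hc : s.card ≤ 2) (hus : u ∉ s)
    {x y x' y' : ℕ} (hx : Lf K u cl n s x x') (hy : Lf K u cl n s y y') (hadj : K.LAdj s x y) :
    Relation.ReflTransGen (h.N.LAdj s) x' y' := by
  rcases hx with ⟨xu, rfl⟩ | ⟨rfl, i, rfl, hi⟩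
  · rcases hy with ⟨yu, rfl⟩ | ⟨rfl, j, rfl, hj⟩
    · refine Relation.ReflTransGen.single ⟨hadj.1, hadj.2.1, ?_⟩
      refine (h.N_old (h.old_n hadj.2.2)).2 (Or.inl ⟨hadj.2.2, ?_⟩)
      simp only [Finset.mem_insert, not_or]
      exact ⟨xu.symm, yu.symm, hus⟩
    · exact LAdj.rsymm (h.lk_b0 hc hus hj xu hadj.symm)
  · rcases hy with ⟨yu, rfl⟩ | ⟨rfl, j, rfl, hj⟩
    · exact h.lk_b0 hc hus hi yu hadj
    · exact h.lk_a hc hi hj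

lemma lk_lift (h : Ctx K u Q cl n) {s : Finset ℕ} (hus : u ∉ s) {x : ℕ}
    (hx : insert x s ∈ K.faces) : ∃ x', Lf K u cl n s x x' := by
  by_cases e : x = u
  · subst e
    obtain ⟨i, hi⟩ := h.p5 hus hx
    exact ⟨n i, Or.inr ⟨rfl, i, rfl, hi⟩⟩
  · exact ⟨x, Or.inl ⟨e, rfl⟩⟩

lemma lk_c (h : Ctx K u Q cl n) {s : Finset ℕ} (hc : s.card ≤ 2) (hus : u ∉ s)
    {x y x' y' : ℕ} (hx : Lf K u cl n s x x') (hy : Lf K u cl n s y y')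
    (hp : Relation.ReflTransGen (K.LAdj s) x y) :
    Relation.ReflTransGen (h.N.LAdj s) x' y' := by
  induction hp generalizing y' with
  | refl =>
    rcases hx with ⟨xu, rfl⟩ | ⟨rfl, i, rfl, hi⟩
    · rcases hy with ⟨yu, rfl⟩ | ⟨rfl, j, rfl, hj⟩
      · exact Relation.ReflTransGen.refl
      · exact (xu rfl).elim
    · rcases hy with ⟨yu, rfl⟩ | ⟨-, j, rfl, hj⟩
      · exact (yu rfl).elim
      · exact h.lk_a hc hi hj
  | @tail p q _ hadj ih =>
    obtain ⟨p', hp'⟩ := h.lk_lift hus (x := p) (K.down_closed _ hadj.2.2 _ (by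
      intro z; simp only [Finset.mem_insert]; tauto) (by simp))
    exact (ih hp').trans (h.lk_b hc hus hp' hy hadj)

lemma lk_d (h : Ctx K u Q cl n) {s : Finset ℕ} (hc : s.card ≤ 2) (hs : s ∈ K.faces)
    {x' : ℕ} (hx's : x' ∉ s) (hx' : insert x' s ∈ h.N.faces) :
    ∃ x x'', x ∉ s ∧ insert x s ∈ K.faces ∧ Lf K u cl n s x x'' ∧
      Relation.ReflTransGen (h.N.LAdj s) x' x'' := by
  have lem : ∀ i, K.Dd u cl i s → ∃ x, x ∉ s ∧ insert x s ∈ K.faces ∧ Lf K u cl n s x (n i) :=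
    fun i hD => ⟨u, h.p6u hD, h.p6K hD, Or.inr ⟨rfl, i, rfl, hD⟩⟩
  by_cases hn : ∃ i, x' = n i
  · obtain ⟨i, rfl⟩ := hn
    have hD := h.De_small ((h.N_new (h.old_n hs i)).1 hx') hc
    obtain ⟨x, h1, h2, h3⟩ := lem i hD
    exact ⟨x, _, h1, h2, h3, Relation.ReflTransGen.refl⟩
  · push Not at hn
    rcases (h.N_old (s := insert x' s) (by
        intro i; simp only [Finset.mem_insert, not_or]
        exact ⟨(hn i).symm, h.old_n hs i⟩)).1 hx' with h1 | h1
    · exact ⟨x', x', hx's, h1.1, Or.inl ⟨fun e => h1.2 (by simp [e]), rfl⟩,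
        Relation.ReflTransGen.refl⟩
    · have hsQ : s ⊂ Q := h1 ▸ Finset.ssubset_insert hx's
      obtain ⟨x, h2, h3, h4⟩ := lem true (h.p3 true hsQ)
      refine ⟨x, _, h2, h3, h4, Relation.ReflTransGen.single (LAdj.symm ⟨h.old_n hs _, hx's, ?_⟩)⟩
      rw [h1]; exact (h.NQ true).1

lemma lk_old (h : Ctx K u Q cl n) {s : Finset ℕ} (hc : s.card ≤ 2) (hs : s ∈ K.faces)
    (hus : u ∉ s) {x y : ℕ} (hxs : x ∉ s) (hys : y ∉ s) (hx : insert x s ∈ h.N.faces)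
    (hy : insert y s ∈ h.N.faces) : Relation.ReflTransGen (h.N.LAdj s) x y := by
  obtain ⟨a, a', a1, a2, a3, a4⟩ := h.lk_d hc hs hxs hx
  obtain ⟨b, b', b1, b2, b3, b4⟩ := h.lk_d hc hs hys hy
  exact (a4.trans (h.lk_c hc hus a3 b3 (h.conn hs hc a b a1 b1 a2 b2))).trans (LAdj.rsymm b4)

lemma new_adj (h : Ctx K u Q cl n) {i : Bool} {s : Finset ℕ} {x y : ℕ}
    (hx : x ∉ s) (hy : y ∉ s) (hD : De K u Q cl i (insert x (insert y s))) :
    h.N.LAdj (insert (n i) s) x y := by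
  have hn := h.De_n i hD
  have e : insert x (insert y (insert (n i) s)) = insert (n i) (insert x (insert y s)) := by
    ext z; simp only [Finset.mem_insert]; tauto
  simp only [Finset.mem_insert, not_or] at hn
  refine ⟨?_, ?_, ?_⟩
  · simp only [Finset.mem_insert, not_or]; exact ⟨Ne.symm hn.1, hx⟩
  · simp only [Finset.mem_insert, not_or]; exact ⟨Ne.symm hn.2.1, hy⟩
  · rw [e, h.N_new (h.De_n i hD)]; exact hD

lemma lk_new (h : Ctx K u Q cl n) {i : Bool} {s : Finset ℕ} (hc : s.card ≤ 1)
    (hs : De K u Q cl i s) {x y : ℕ} (hxs : x ∉ insert (n i) s) (hys : y ∉ insert (n i) s)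
    (hx : insert x (insert (n i) s) ∈ h.N.faces)
    (hy : insert y (insert (n i) s) ∈ h.N.faces) :
    Relation.ReflTransGen (h.N.LAdj (insert (n i) s)) x y := by
  have hn := h.De_n i hs
  have us := h.De_u hs
  have vert : ∀ z, z ∉ insert (n i) s → insert z (insert (n i) s) ∈ h.N.faces →
      z ∉ s ∧ K.Dd u cl i (insert z s) := by
    intro z hz hz'
    simp only [Finset.mem_insert, not_or] at hz
    rw [Finset.insert_comm, h.N_new (by
      simp only [Finset.mem_insert, not_or]; exact ⟨Ne.symm hz.1, hn⟩)] at hz'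
    exact ⟨hz.2, h.De_small hz' ((Finset.card_insert_le _ _).trans (by omega))⟩
  obtain ⟨xs, hDx⟩ := vert x hxs hx
  obtain ⟨ys, hDy⟩ := vert y hys hy
  have hK : insert u s ∈ K.faces := h.p6K (h.De_small hs (by omega))
  have cK : (insert u s).card ≤ 2 := (Finset.card_insert_le _ _).trans (by omega)
  have path : ∀ a b, a ∉ s → b ∉ s → a ≠ u → b ≠ u → insert u (insert a s) ∈ K.faces →
      insert u (insert b s) ∈ K.faces → Relation.ReflTransGen (K.LAdj (insert u s)) a b := by
    intro a b ha hb hau hbu hfa hfb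
    refine h.conn hK cK a b ?_ ?_ (by rwa [Finset.insert_comm]) (by rwa [Finset.insert_comm])
    · simp only [Finset.mem_insert, not_or]; exact ⟨hau, ha⟩
    · simp only [Finset.mem_insert, not_or]; exact ⟨hbu, hb⟩
  have une : ∀ {z}, K.Dd u cl i (insert z s) → z ≠ u := fun hD e => h.p6u hD (by simp [e])
  have step : ∀ {p q : ℕ}, K.LAdj (insert u s) p q → p ∉ s ∧ q ∉ s ∧
      u ∉ insert p (insert q s) ∧ insert u (insert p (insert q s)) ∈ K.faces := by
    rintro p q ⟨h1, h2, h3⟩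
    simp only [Finset.mem_insert, not_or] at h1 h2 ⊢
    refine ⟨h1.2, h2.2, ⟨Ne.symm h1.1, Ne.symm h2.1, us⟩, ?_⟩
    convert h3 using 1
    ext z; simp only [Finset.mem_insert]; tauto
  by_cases hw : ∃ w ∈ s, w ∉ Q
  · obtain ⟨w, hws, hwQ⟩ := hw
    refine Relation.ReflTransGen.mono ?_ _ _ (path x y xs ys (une hDx) (une hDy) (h.p6K hDx) (h.p6K hDy))
    intro p q hpq
    obtain ⟨h1, h2, h3, h4⟩ := step hpq
    refine h.new_adj h1 h2 (Or.inl (h.p7 hwQ hDx (w := w) ?_ ?_ h3 h4))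
    · exact Finset.mem_insert_of_mem hws
    · exact Finset.mem_insert_of_mem (Finset.mem_insert_of_mem hws)
  · push Not at hw
    have hsQ : s ⊆ Q := hw
    obtain ⟨t, ht, hts⟩ := Finset.exists_mem_notMem_of_card_lt_card (s := s) (t := Q)
      (by rw [h.Qcard]; omega)
    have tsub : insert t s ⊂ Q := by
      refine (Finset.ssubset_iff_subset_ne).2 ⟨Finset.insert_subset ht hsQ, fun e => ?_⟩
      have h1 := h.Qcard
      have h2 := Finset.card_insert_le t s
      rw [e] at h2; omega
    have hDt := h.p3 i tsub
    have reach : ∀ z, z ∉ s → K.Dd u cl i (insert z s) → ∃ q ∈ Q, q ∉ s ∧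
        Relation.ReflTransGen (h.N.LAdj (insert (n i) s)) z q := by
      intro z hz hDz
      have hp := path z t hz hts (une hDz) (une hDt) (h.p6K hDz) (h.p6K hDt)
      induction hp using Relation.ReflTransGen.head_induction_on with
      | refl => exact ⟨t, ht, hts, Relation.ReflTransGen.refl⟩
      | @head p q hadj _ ih =>
        by_cases hpQ : p ∈ Q
        · exact ⟨p, hpQ, hz, Relation.ReflTransGen.refl⟩
        · obtain ⟨h1, h2, h3, h4⟩ := step hadj
          have hD := h.p7 hpQ hDz (by simp) (s := insert p (insert q s)) (by simp) h3 h4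
          obtain ⟨r, r1, r2, r3⟩ := ih h2 (h.p6d hD (Finset.subset_insert _ _))
          exact ⟨r, r1, r2, Relation.ReflTransGen.head (h.new_adj h1 h2 (Or.inl hD)) r3⟩
    obtain ⟨q, q1, q2, q3⟩ := reach x xs hDx
    obtain ⟨r, r1, r2, r3⟩ := reach y ys hDy
    refine (q3.tail (h.new_adj q2 r2 (h.De_iff.2 (Or.inr ?_)))).trans (LAdj.rsymm r3)
    exact Finset.insert_subset q1 (Finset.insert_subset r1 hsQ)

lemma N_npm (h : Ctx K u Q cl n) : h.N.IsNormalPseudomanifold 3 := by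
  refine ⟨h.N_pure, h.N_strong, fun r hr hc => ?_, fun s hs hc => ?_⟩
  · rw [card_two_iff]
    simpa using h.N_two hr hc
  · have hc' : s.card ≤ 2 := hc
    rw [lk_conn_iff]
    refine ⟨lk_vertex h.N_pure hs hc', fun x y => ?_⟩
    rcases (h.memN.1 hs).2 with h1 | rfl | ⟨i, t, hD, rfl⟩
    · exact fun a b c d => h.lk_old hc' h1.1 h1.2 a b c d
    · have := h.Qcard; omega
    · rw [Finset.card_insert_of_notMem (h.De_n i hD)] at hc'
      exact fun a b c d => h.lk_new (by omega) hD a b c d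

end Ctx
end SComplex

namespace SComplex

lemma card_cone (A : Finset (Finset ℕ)) (V : Finset ℕ) (p : ℕ) (hA : ∀ s ∈ A, p ∉ s)
    (hV : p ∉ V) : (A ∪ V.image (fun x => ({p, x} : Finset ℕ))).card = A.card + V.card := by
  rw [Finset.card_union_of_disjoint, Finset.card_image_of_injOn]
  · intro x hx y hy hxy
    have h1 : x ∈ ({p, y} : Finset ℕ) := by
      have : ({p, x} : Finset ℕ) = {p, y} := hxy
      rw [← this]; simp
    simp only [Finset.mem_insert, Finset.mem_singleton] at h1
    exact h1.resolve_left fun e => hV (e ▸ hx)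
  · rw [Finset.disjoint_left]
    intro s hs hs'
    obtain ⟨x, -, rfl⟩ := Finset.mem_image.1 hs'
    exact hA _ hs (by simp)

namespace Ctx
variable {K : SComplex} {u : ℕ} {Q : Finset ℕ} {cl : Finset ℕ → Bool} {n : Bool → ℕ}

open Classical in
/-- neighbours of colour `i` -/
noncomputable def V (K : SComplex) (u : ℕ) (cl : Finset ℕ → Bool) (i : Bool) : Finset ℕ :=
  K.vertexSet.filter fun x => K.Dd u cl i {x}

lemma mem_V (h : Ctx K u Q cl n) {i : Bool} {x : ℕ} : x ∈ V K u cl i ↔ K.Dd u cl i {x} := by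
  unfold V
  simp only [Finset.mem_filter, and_iff_right_iff_imp]
  intro hD
  exact sub_vertexSet (h.p6m hD (by simp)) (by simp)

lemma sing_Q (h : Ctx K u Q cl n) {x : ℕ} (hx : x ∈ Q) : {x} ⊂ Q := by
  refine (Finset.ssubset_iff_subset_ne).2 ⟨by simpa using hx, fun e => ?_⟩
  have := h.Qcard
  rw [← e] at this; simp at this

lemma V_inter (h : Ctx K u Q cl n) : V K u cl true ∩ V K u cl false = Q := by
  ext x
  rw [Finset.mem_inter, h.mem_V, h.mem_V]
  constructor
  · rintro ⟨h1, h2⟩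
    exact h.p2 (by simp) h1 h2 (by simp)
  · intro hx
    exact ⟨h.p3 _ (h.sing_Q hx), h.p3 _ (h.sing_Q hx)⟩

lemma card_one_two {s : Finset ℕ} {p : ℕ} (hc : s.card = 2) (hp : p ∈ s) :
    ∃ x, x ≠ p ∧ s = {p, x} := by
  obtain ⟨a, b, hab, rfl⟩ := Finset.card_eq_two.1 hc
  simp only [Finset.mem_insert, Finset.mem_singleton] at hp
  rcases hp with rfl | rfl
  · exact ⟨b, hab.symm, rfl⟩
  · exact ⟨a, hab, Finset.pair_comm _ _⟩

lemma K_f1 (h : Ctx K u Q cl n) : K.fnum 1 = (K.faces.filter fun s => s.card = 2 ∧ u ∉ s).card +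
    (V K u cl true ∪ V K u cl false).card := by
  rw [← card_cone _ _ u]
  · unfold fnum
    congr 1
    ext s
    simp only [Finset.mem_filter, Finset.mem_union, Finset.mem_image, h.mem_V]
    constructor
    · rintro ⟨h1, h2⟩
      by_cases hu : u ∈ s
      · right
        obtain ⟨x, hx, rfl⟩ := card_one_two h2 hu
        obtain ⟨i, hi⟩ := h.p5 (t := {x}) (by simpa using hx.symm) h1
        refine ⟨x, ?_, rfl⟩
        cases i
        · exact Or.inr hi
        · exact Or.inl hi
      · exact Or.inl ⟨h1, h2, hu⟩
    · have key : ∀ i x, K.Dd u cl i {x} → ({u, x} : Finset ℕ) ∈ K.faces ∧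
          ({u, x} : Finset ℕ).card = 2 := fun i x hD =>
        ⟨h.p6K hD, Finset.card_pair (by simpa using h.p6u hD)⟩
      rintro (h1 | ⟨x, h1 | h1, rfl⟩)
      · exact ⟨h1.1, h1.2.1⟩
      · exact key _ _ h1
      · exact key _ _ h1
  · intro s hs; exact (Finset.mem_filter.1 hs).2.2
  · rw [Finset.mem_union, h.mem_V, h.mem_V]
    rintro (h1 | h1) <;> exact h.p6u h1 (by simp)

lemma N_f1 (h : Ctx K u Q cl n) : h.N.fnum 1 = (K.faces.filter fun s => s.card = 2 ∧ u ∉ s).card +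
    (V K u cl true).card + (V K u cl false).card := by
  have hV : ∀ i j, n i ∉ V K u cl j := fun i j hn => h.p6n i (h.mem_V.1 hn) (by simp)
  rw [← card_cone _ (V K u cl true) (n true) _ (hV _ _), ← card_cone _ _ (n false) _ (hV _ _)]
  · unfold fnum
    congr 1
    ext s
    simp only [Finset.mem_filter, Finset.mem_union, Finset.mem_image, h.mem_V]
    constructor
    · rintro ⟨h1, h2⟩
      rcases (h.memN.1 h1).2 with h3 | rfl | ⟨i, t, hD, rfl⟩
      · exact Or.inl (Or.inl ⟨h3.1, h2, h3.2⟩)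
      · rw [h.Qcard] at h2; omega
      · rw [Finset.card_insert_of_notMem (h.De_n i hD)] at h2
        have hc : t.card = 1 := by omega
        obtain ⟨x, rfl⟩ := Finset.card_eq_one.1 hc
        have hD' := h.De_small hD (by simp)
        cases i
        · exact Or.inr ⟨x, hD', rfl⟩
        · exact Or.inl (Or.inr ⟨x, hD', rfl⟩)
    · have key : ∀ i x, K.Dd u cl i {x} → ({n i, x} : Finset ℕ) ∈ h.N.faces ∧
          ({n i, x} : Finset ℕ).card = 2 := fun i x hD =>
        ⟨(h.N_new (h.p6n i hD)).2 (Or.inl hD), Finset.card_pair (by simpa using h.p6n i hD)⟩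
      rintro ((h1 | ⟨x, h1, rfl⟩) | ⟨x, h1, rfl⟩)
      · exact ⟨(h.N_old (h.old_n h1.1)).2 (Or.inl ⟨h1.1, h1.2.2⟩), h1.2.1⟩
      · exact key _ _ h1
      · exact key _ _ h1
  · intro s hs
    simp only [Finset.mem_filter, Finset.mem_union, Finset.mem_image] at hs
    rcases hs with hs | ⟨x, hx, rfl⟩
    · exact h.old_n hs.1 _
    · simp only [Finset.mem_insert, Finset.mem_singleton, not_or]
      refine ⟨h.ninj.symm, ?_⟩
      rintro rfl
      exact hV _ _ hx
  · intro s hs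
    exact h.old_n (Finset.mem_filter.1 hs).1 _

lemma K_f0 (h : Ctx K u Q cl n) :
    K.fnum 0 = (K.faces.filter fun s => s.card = 1 ∧ u ∉ s).card + 1 := by
  rw [← Finset.card_insert_of_notMem (a := {u})]
  · unfold fnum
    congr 1
    ext s
    simp only [Finset.mem_filter, Finset.mem_insert]
    constructor
    · rintro ⟨h1, h2⟩
      by_cases hu : u ∈ s
      · obtain ⟨x, rfl⟩ := Finset.card_eq_one.1 h2
        left; simp only [Finset.mem_singleton] at hu; rw [hu]
      · exact Or.inr ⟨h1, h2, hu⟩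
    · rintro (rfl | h1)
      · exact ⟨h.hu, by simp⟩
      · exact ⟨h1.1, h1.2.1⟩
  · simp

lemma Dd_empty (h : Ctx K u Q cl n) (i : Bool) : K.Dd u cl i ∅ :=
  h.p3 i (Finset.ssubset_iff_subset_ne.2 ⟨by simp, h.Qne.symm⟩)

lemma N_f0 (h : Ctx K u Q cl n) :
    h.N.fnum 0 = (K.faces.filter fun s => s.card = 1 ∧ u ∉ s).card + 1 + 1 := by
  have hn : ∀ i, ({n i} : Finset ℕ) ∉ K.faces.filter fun s => s.card = 1 ∧ u ∉ s := fun i hi =>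
    h.fresh i _ (Finset.mem_filter.1 hi).1 (by simp)
  rw [← Finset.card_insert_of_notMem (hn true), ← Finset.card_insert_of_notMem (a := {n false})]
  · unfold fnum
    congr 1
    ext s
    simp only [Finset.mem_filter, Finset.mem_insert]
    constructor
    · rintro ⟨h1, h2⟩
      rcases (h.memN.1 h1).2 with h3 | rfl | ⟨i, t, hD, rfl⟩
      · exact Or.inr (Or.inr ⟨h3.1, h2, h3.2⟩)
      · rw [h.Qcard] at h2; omega
      · rw [Finset.card_insert_of_notMem (h.De_n i hD)] at h2
        have hc : t = ∅ := Finset.card_eq_zero.1 (by omega)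
        subst hc
        cases i
        · exact Or.inl rfl
        · exact Or.inr (Or.inl rfl)
    · have key : ∀ i, ({n i} : Finset ℕ) ∈ h.N.faces ∧ ({n i} : Finset ℕ).card = 0 + 1 := fun i =>
        ⟨(h.N_new (t := ∅) (by simp)).2 (Or.inl (h.Dd_empty i)), by simp⟩
      rintro (rfl | rfl | h1)
      · exact key _
      · exact key _
      · exact ⟨(h.N_old (h.old_n h1.1)).2 (Or.inl ⟨h1.1, h1.2.2⟩), h1.2.1⟩
  · rw [Finset.mem_insert, not_or]
    exact ⟨fun e => h.ninj (Finset.singleton_inj.1 e).symm, hn false⟩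

lemma N_g2 (h : Ctx K u Q cl n) : h.N.g2 = K.g2 - 1 := by
  have h1 := h.K_f0
  have h2 := h.N_f0
  have h3 := h.K_f1
  have h4 := h.N_f1
  have h5 := Finset.card_union_add_card_inter (V K u cl true) (V K u cl false)
  rw [h.V_inter, h.Qcard] at h5
  unfold g2
  omega

/-! ### The expanded complex -/

lemma M_old (h : Ctx K u Q cl n) {s : Finset ℕ} :
    (s ∈ h.M.faces ∧ n true ∉ s ∧ n false ∉ s) ↔ s ∈ K.faces ∧ u ∉ s := by
  rw [h.memM]
  constructor
  · rintro ⟨⟨-, h1 | ⟨i, t, -, rfl⟩ | ⟨t, -, rfl⟩⟩, h2, h3⟩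
    · exact h1
    · cases i <;> simp at h2 h3
    · simp at h2
  · intro h1
    exact ⟨⟨h.Kne h1.1, Or.inl h1⟩, h.old_n h1.1 _, h.old_n h1.1 _⟩

lemma M_new (h : Ctx K u Q cl n) {i : Bool} {t : Finset ℕ} (ht : ∀ j, n j ∉ t) :
    insert (n i) t ∈ h.M.faces ↔ K.Dd u cl i t := by
  rw [h.memM]
  constructor
  · rintro ⟨-, h1 | ⟨j, t', hD, he⟩ | ⟨t', hD, he⟩⟩
    · exact (h.fresh i _ h1.1 (by simp)).elim
    · have h1 : n i ∈ insert (n j) t' := he ▸ (by simp)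
      rw [Finset.mem_insert] at h1
      have h2 := h.inj (h1.resolve_right (h.p6n i hD))
      subst h2
      have : t = t' := by
        rw [← Finset.erase_insert (ht i), he, Finset.erase_insert (h.p6n i hD)]
      rw [this]; exact hD
    · have h1 : n (!i) ∈ insert (n i) t := by
        rw [he]; cases i <;> simp
      rw [Finset.mem_insert] at h1
      have h2 := h.inj (h1.resolve_right (ht _))
      cases i <;> simp at h2
  · intro hD
    exact ⟨by simp, Or.inr (Or.inl ⟨i, t, hD, rfl⟩)⟩

lemma M_both (h : Ctx K u Q cl n) {t : Finset ℕ} (ht : ∀ j, n j ∉ t) :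
    insert (n true) (insert (n false) t) ∈ h.M.faces ↔ t ⊂ Q := by
  rw [h.memM]
  constructor
  · rintro ⟨-, h1 | ⟨j, t', hD, he⟩ | ⟨t', hD, he⟩⟩
    · exact (h.fresh true _ h1.1 (by simp)).elim
    · have h1 : ∀ i, n i ∈ insert (n j) t' := fun i => by
        rw [← he]; cases i <;> simp
      have h2 := h1 (!j)
      rw [Finset.mem_insert] at h2
      have h3 := h.inj (h2.resolve_right (h.p6n _ hD))
      cases j <;> simp at h3
    · have : t = t' := by
        ext x
        have e1 : x ∈ insert (n true) (insert (n false) t) ↔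
          x ∈ insert (n true) (insert (n false) t') := by rw [he]
        simp only [Finset.mem_insert] at e1
        have a1 : x ∈ t → x ≠ n true ∧ x ≠ n false := fun hx =>
          ⟨fun e => ht true (e ▸ hx), fun e => ht false (e ▸ hx)⟩
        have a2 : x ∈ t' → x ≠ n true ∧ x ≠ n false := fun hx =>
          ⟨fun e => h.nQ true (hD.1 (e ▸ hx)), fun e => h.nQ false (hD.1 (e ▸ hx))⟩
        tauto
      rw [this]; exact hD
  · intro hD
    exact ⟨by simp, Or.inr (Or.inr ⟨t, hD, rfl⟩)⟩

lemma Q_mem_M (h : Ctx K u Q cl n) {t : Finset ℕ} (ht : t ⊂ Q) (hne : t ≠ ∅) :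
    t ∈ h.M.faces := h.memM.2 ⟨hne, Or.inl (h.Dd_old (h.p3 true ht) hne)⟩

lemma lk_both (h : Ctx K u Q cl n) :
    (h.M.lk {n true, n false}).faces = properFaces Q := by
  ext t
  simp only [lk, properFaces, Finset.mem_filter, Finset.mem_powerset]
  have e : t ∪ {n true, n false} = insert (n true) (insert (n false) t) := by
    ext z; simp only [Finset.mem_union, Finset.mem_insert, Finset.mem_singleton]; tauto
  have e2 : t ∩ {n true, n false} = ∅ ↔ ∀ j, n j ∉ t := by
    rw [← Finset.disjoint_iff_inter_eq_empty, Finset.disjoint_right]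
    simp only [Finset.mem_insert, Finset.mem_singleton, forall_eq_or_imp, forall_eq, Bool.forall_bool]
    tauto
  rw [e, e2]
  constructor
  · rintro ⟨h1, h2, h3⟩
    rw [h.M_both h2] at h3
    exact ⟨h3.1, (h.memM.1 h1).1, h3.ne⟩
  · rintro ⟨h1, h2, h3⟩
    have h4 : t ⊂ Q := Finset.ssubset_iff_subset_ne.2 ⟨h1, h3⟩
    have h5 : ∀ j, n j ∉ t := fun j hj => h.nQ j (h1 hj)
    exact ⟨h.Q_mem_M h4 h2, h5, (h.M_both h5).2 h4⟩

lemma lk_cond (h : Ctx K u Q cl n) :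
    (h.M.lk {n true}).faces ∩ (h.M.lk {n false}).faces = properFaces Q := by
  ext t
  simp only [lk, properFaces, Finset.mem_filter, Finset.mem_powerset, Finset.mem_inter]
  have e : ∀ i, t ∪ {n i} = insert (n i) t := fun i => by
    ext z; simp only [Finset.mem_union, Finset.mem_insert, Finset.mem_singleton]; tauto
  have e2 : ∀ i, t ∩ {n i} = ∅ ↔ n i ∉ t := fun i => by
    rw [← Finset.disjoint_iff_inter_eq_empty, Finset.disjoint_right]
    simp
  rw [e, e2, e, e2]
  constructor
  · rintro ⟨⟨h1, h2, h3⟩, -, h4, h5⟩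
    have hn : ∀ j, n j ∉ t := by rintro (_ | _) <;> assumption
    rw [h.M_new hn] at h3 h5
    refine ⟨h.p2 (by simp) h3 h5, (h.memM.1 h1).1, ?_⟩
    rintro rfl
    exact h.p4 h3 (Finset.Subset.refl _)
  · rintro ⟨h1, h2, h3⟩
    have h4 : t ⊂ Q := Finset.ssubset_iff_subset_ne.2 ⟨h1, h3⟩
    have h5 : ∀ j, n j ∉ t := fun j hj => h.nQ j (h1 hj)
    have h6 : ∀ i, insert (n i) t ∈ h.M.faces := fun i => (h.M_new h5).2 (h.p3 i h4)
    exact ⟨⟨h.Q_mem_M h4 h2, h5 _, h6 _⟩, h.Q_mem_M h4 h2, h5 _, h6 _⟩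

lemma u_not_M (h : Ctx K u Q cl n) : u ∉ h.M.vertexSet := by
  unfold vertexSet
  rw [Finset.mem_sup]
  rintro ⟨s, hs, hu⟩
  simp only [id] at hu
  rcases (h.memM.1 hs).2 with h1 | ⟨i, t, hD, rfl⟩ | ⟨t, hD, rfl⟩
  · exact h1.2 hu
  · rw [Finset.mem_insert] at hu
    exact hu.elim (fun e => h.nu i e.symm) (h.p6u hD)
  · rw [Finset.mem_insert, Finset.mem_insert] at hu
    rcases hu with e | e | e
    · exact h.nu _ e.symm
    · exact h.nu _ e.symm
    · exact h.uQ (hD.1 e)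

lemma M_filter (h : Ctx K u Q cl n) :
    (h.M.faces.filter fun α => n true ∉ α ∧ n false ∉ α) = K.faces.filter fun α => u ∉ α := by
  ext s
  rw [Finset.mem_filter, Finset.mem_filter]
  exact h.M_old

lemma bd_count (h : Ctx K u Q cl n) {r : Finset ℕ} (hr : r ∈ K.faces) (hu : u ∉ r)
    (hc : r.card = 3) :
    ((K.faces.filter fun α => u ∉ α).filter fun t => t.card = 3 + 1 ∧ r ⊆ t).card = 1 ↔
      insert u r ∈ K.faces := by
  obtain ⟨F, G, hFG, hH⟩ := h.two hr hc
  have aF := (hH F).2 (Or.inl rfl)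
  have aG := (hH G).2 (Or.inr rfl)
  have cu : (insert u r).card = 4 := by rw [Finset.card_insert_of_notMem hu, hc]
  have key : ∀ H, H.card = 4 → r ⊆ H → u ∈ H → H = insert u r := fun H h1 h2 h3 =>
    (Finset.eq_of_subset_of_card_le (Finset.insert_subset h3 h2) (by rw [h1, cu])).symm
  constructor
  · intro h1
    by_contra h2
    have uF : u ∉ F := fun e => h2 (key F aF.2.1 aF.2.2 e ▸ aF.1)
    have uG : u ∉ G := fun e => h2 (key G aG.2.1 aG.2.2 e ▸ aG.1)
    have h3 := Finset.card_le_one.1 h1.le F (by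
      simp only [Finset.mem_filter]; exact ⟨⟨aF.1, uF⟩, aF.2⟩) G (by
      simp only [Finset.mem_filter]; exact ⟨⟨aG.1, uG⟩, aG.2⟩)
    exact hFG h3
  · intro h1
    have main : ∀ A B : Finset ℕ, A ≠ B → (∀ H, (H ∈ K.faces ∧ H.card = 4 ∧ r ⊆ H) ↔
        H = A ∨ H = B) → insert u r = A →
        ((K.faces.filter fun α => u ∉ α).filter fun t => t.card = 3 + 1 ∧ r ⊆ t).card = 1 := by
      intro A B hAB hAH hA
      have aB := (hAH B).2 (Or.inr rfl)
      rw [Finset.card_eq_one]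
      refine ⟨B, ?_⟩
      ext H
      simp only [Finset.mem_filter, Finset.mem_singleton]
      constructor
      · rintro ⟨⟨h2, h3⟩, h4⟩
        rcases (hAH H).1 ⟨h2, h4⟩ with rfl | rfl
        · exact (h3 (hA ▸ (by simp))).elim
        · rfl
      · rintro rfl
        exact ⟨⟨aB.1, fun e => hAB ((key _ aB.2.1 aB.2.2 e).trans hA).symm⟩, aB.2⟩
    rcases (hH (insert u r)).1 ⟨h1, cu, Finset.subset_insert _ _⟩ with h2 | h2
    · exact main F G hFG hH h2
    · exact main G F hFG.symm (fun H => by rw [hH H, or_comm]) h2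

lemma mem_bd (h : Ctx K u Q cl n) {s : Finset ℕ} :
    s ∈ bdryFaces (K.faces.filter fun α => u ∉ α) 3 ↔
      s ∈ K.faces ∧ u ∉ s ∧ insert u s ∈ K.faces := by
  unfold bdryFaces
  rw [Finset.mem_filter, Finset.mem_filter]
  constructor
  · rintro ⟨⟨h1, h2⟩, r, hr, hsr, hc, h3⟩
    rw [Finset.mem_filter] at hr
    rw [h.bd_count hr.1 hr.2 hc] at h3
    exact ⟨h1, h2, K.down_closed _ h3 _ (Finset.insert_subset_insert _ hsr) (by simp)⟩
  · rintro ⟨h1, h2, h3⟩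
    obtain ⟨i, T, hT, -, hsT⟩ := h.p5 h2 h3
    exact ⟨⟨h1, h2⟩, T, Finset.mem_filter.2 ⟨h.triK hT, hT.1⟩, hsT, hT.2.1,
      (h.bd_count (h.triK hT) hT.1 hT.2.1).2 hT.2.2⟩

lemma contraction (h : Ctx K u Q cl n) : EdgeContraction h.M K := by
  refine ⟨n true, n false, ?_, h.ninj, ?_, u, h.u_not_M, ?_⟩
  · exact (h.M_both (t := ∅) (by simp)).2
      (Finset.ssubset_iff_subset_ne.2 ⟨by simp, h.Qne.symm⟩)
  · rw [h.lk_cond, h.lk_both]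
  · rw [h.M_filter]
    ext s
    unfold coneFaces
    simp only [Finset.mem_union, Finset.mem_filter, Finset.mem_image, Finset.mem_singleton,
      h.mem_bd]
    constructor
    · intro hs
      by_cases hu : u ∈ s
      · right
        by_cases e : s.erase u = ∅
        · right
          rw [← Finset.insert_erase hu, e]; rfl
        · left; right
          refine ⟨s.erase u, ⟨K.down_closed _ hs _ (Finset.erase_subset _ _) e,
            Finset.notMem_erase _ _, ?_⟩, Finset.insert_erase hu⟩
          rw [Finset.insert_erase hu]; exact hs
      · exact Or.inl ⟨hs, hu⟩
    · rintro (h1 | (h1 | ⟨t, h1, rfl⟩) | rfl)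
      · exact h1.1
      · exact h1.1
      · exact h1.2.2
      · exact h.hu

lemma bistellar (h : Ctx K u Q cl n) : BistellarTwoMove h.M h.N := by
  obtain ⟨a, b, c, -, -, -, hQ⟩ := Finset.card_eq_three.1 h.Qcard
  refine ⟨n true, n false, a, b, c, ?_, h.ninj, ?_⟩
  · exact (h.M_both (t := ∅) (by simp)).2
      (Finset.ssubset_iff_subset_ne.2 ⟨by simp, h.Qne.symm⟩)
  rw [← hQ]
  refine ⟨h.Qcard, h.nQ _, h.nQ _, h.lk_both, ?_, ?_⟩
  · intro hm
    exact h.Qnot (h.M_old.1 ⟨hm, h.nQ _, h.nQ _⟩).1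
  · ext s
    unfold simplexFaces
    simp only [Finset.mem_union, Finset.mem_filter, Finset.mem_powerset]
    constructor
    · intro hs
      rcases (h.memN.1 hs).2 with h1 | h1 | ⟨i, t, hD | rfl, rfl⟩
      · exact Or.inl (Or.inl ⟨h.memM.2 ⟨h.Kne h1.1, Or.inl h1⟩,
          fun e => h.old_n h1.1 true (e (by simp))⟩)
      · exact Or.inr ⟨h1 ▸ Finset.subset_insert _ _, h1 ▸ h.Qne⟩
      · refine Or.inl (Or.inl ⟨(h.M_new fun j => h.p6n j hD).2 hD, fun e => ?_⟩)
        have h2 : n (!i) ∈ insert (n i) t := e (by cases i <;> simp)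
        rw [Finset.mem_insert] at h2
        have h3 := h.inj (h2.resolve_right (h.p6n _ hD))
        cases i <;> simp at h3
      · cases i
        · exact Or.inr ⟨Finset.Subset.refl _, by simp⟩
        · exact Or.inl (Or.inr ⟨Finset.Subset.refl _, by simp⟩)
    · rintro ((⟨h1, h2⟩ | ⟨h1, h2⟩) | ⟨h1, h2⟩)
      · rcases (h.memM.1 h1).2 with h3 | ⟨i, t, hD, rfl⟩ | ⟨t, hD, rfl⟩
        · exact (h.N_old (h.old_n h3.1)).2 (Or.inl h3)
        · exact (h.N_new (h.p6n i hD)).2 (Or.inl hD)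
        · exact (h2 (by intro z; simp only [Finset.mem_insert, Finset.mem_singleton]; tauto)).elim
      · exact h.N.down_closed _ (h.NQ true).1 _ h1 h2
      · exact h.N.down_closed _ (h.NQ false).1 _ h1 h2

lemma contra (h : Ctx K u Q cl n) (hK : InClassR K) : False := by
  have := hK.2.2.2.2 h.N h.N_npm (Or.inr (Or.inr (Or.inl ⟨h.M, h.contraction, h.bistellar⟩)))
  rw [h.N_g2] at this
  omega

end Ctx
end SComplex

namespace SComplex

lemma mem_lk_vertex {K : SComplex} {u : ℕ} {t : Finset ℕ} :
    t ∈ (K.lk {u}).faces ↔ t ≠ ∅ ∧ u ∉ t ∧ insert u t ∈ K.faces := by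
  simp only [lk, Finset.mem_filter]
  have e : t ∪ {u} = insert u t := by
    ext z; simp only [Finset.mem_union, Finset.mem_insert, Finset.mem_singleton]; tauto
  have e2 : t ∩ {u} = ∅ ↔ u ∉ t := by
    rw [← Finset.disjoint_iff_inter_eq_empty, Finset.disjoint_right]
    simp
  rw [e, e2]
  constructor
  · rintro ⟨h1, h2, h3⟩
    exact ⟨fun e => K.not_empty_mem (e ▸ h1), h2, h3⟩
  · rintro ⟨h1, h2, h3⟩
    exact ⟨K.down_closed _ h3 _ (Finset.subset_insert _ _) h1, h2, h3⟩

lemma tri_two {K : SComplex} (hK : K.IsNormalPseudomanifold 3) {u : ℕ} {e : Finset ℕ}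
    (hc : e.card = 2) (hu : u ∉ e) (he : insert u e ∈ K.faces) :
    ∃ A B, A ≠ B ∧ ∀ T, (K.Tri u T ∧ e ⊆ T) ↔ T = A ∨ T = B := by
  have h2 := hK.2.2.1 _ he (by rw [Finset.card_insert_of_notMem hu, hc])
  rw [card_two_iff] at h2
  obtain ⟨F, G, hFG, hH⟩ := h2
  simp only [Finset.mem_filter] at hH
  have uF : u ∈ F := ((hH F).2 (Or.inl rfl)).2.2 (by simp)
  have uG : u ∈ G := ((hH G).2 (Or.inr rfl)).2.2 (by simp)
  refine ⟨F.erase u, G.erase u, ?_, fun T => ⟨?_, ?_⟩⟩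
  · intro e1
    exact hFG (by rw [← Finset.insert_erase uF, e1, Finset.insert_erase uG])
  · rintro ⟨h1, h3⟩
    have := (hH (insert u T)).1 ⟨h1.2.2, by rw [Finset.card_insert_of_notMem h1.1, h1.2.1],
      Finset.insert_subset_insert _ h3⟩
    rcases this with rfl | rfl
    · left; rw [Finset.erase_insert h1.1]
    · right; rw [Finset.erase_insert h1.1]
  · have key : ∀ H, H = F ∨ H = G → K.Tri u (H.erase u) ∧ e ⊆ H.erase u := by
      intro H hH'
      obtain ⟨a1, a2, a3⟩ := (hH H).2 hH'
      have uH : u ∈ H := a3 (by simp)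
      refine ⟨⟨Finset.notMem_erase _ _, by rw [Finset.card_erase_of_mem uH, a2],
        by rw [Finset.insert_erase uH]; exact a1⟩, fun x hx => Finset.mem_erase.2
        ⟨fun e1 => hu (e1 ▸ hx), a3 (Finset.mem_insert_of_mem hx)⟩⟩
    rintro (rfl | rfl)
    · exact key F (Or.inl rfl)
    · exact key G (Or.inr rfl)

lemma zmod2_zero : ∀ x y : ZMod 2, x + y = 0 → decide (x = 1) = decide (y = 1) := by decide
lemma zmod2_one : ∀ x y : ZMod 2, x + y = 1 → decide (x = 1) ≠ decide (y = 1) := by decide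

lemma triangle_sub {a b c : ℕ} {t : Finset ℕ} (ht : t ⊂ {a, b, c}) :
    t ⊆ {a, b} ∨ t ⊆ {b, c} ∨ t ⊆ {a, c} := by
  obtain ⟨h1, h2⟩ := Finset.ssubset_iff_exists_cons_subset.1 ht
  obtain ⟨h3, h4⟩ := h2
  have hx : h1 ∈ ({a, b, c} : Finset ℕ) := h4 (by simp)
  simp only [Finset.mem_insert, Finset.mem_singleton] at hx
  have hs : ∀ z ∈ t, z ≠ h1 ∧ (z = a ∨ z = b ∨ z = c) := fun z hz => by
    refine ⟨fun e => h3 (e ▸ hz), ?_⟩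
    have := ht.1 hz
    simpa using this
  rcases hx with rfl | rfl | rfl
  · right; left; intro z hz; have := hs z hz; simp; tauto
  · right; right; intro z hz; have := hs z hz; simp; tauto
  · left; intro z hz; have := hs z hz; simp; tauto

lemma part_one (K : SComplex) (u : ℕ) (hK : InClassR K)
    (hu : ({u} : Finset ℕ) ∈ K.faces) (huns : K.HasSphereLink 3 u) (a b c : ℕ) (h1 : a ≠ b)
    (h2 : b ≠ c) (h3 : a ≠ c)
    (hab : ({a, b} : Finset ℕ) ∈ (K.lk {u}).faces)
    (hbc : ({b, c} : Finset ℕ) ∈ (K.lk {u}).faces)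
    (hac : ({a, c} : Finset ℕ) ∈ (K.lk {u}).faces) :
    ({a, b, c} : Finset ℕ) ∈ (K.lk {u}).faces := by
  by_contra hnot
  obtain ⟨hom⟩ := huns
  obtain ⟨cl0, hcl⟩ := exists_class (K.lk {u}) hom h1 h2 h3 hab hbc hac
  rw [mem_lk_vertex] at hab hbc hac hnot
  obtain ⟨Q, hQ⟩ : ∃ Q : Finset ℕ, Q = {a, b, c} := ⟨_, rfl⟩
  rw [← hQ] at hnot hcl
  have Qcard : Q.card = 3 := Finset.card_eq_three.2 ⟨a, b, c, h1, h3, h2, hQ⟩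
  have uQ : u ∉ Q := by
    have x1 := hab.2.1
    have x2 := hbc.2.1
    simp only [Finset.mem_insert, Finset.mem_singleton, not_or, hQ] at x1 x2 ⊢
    tauto
  have Qne : Q ≠ ∅ := by rintro e; rw [e] at Qcard; simp at Qcard
  have Qsub : ∀ t, t ⊂ Q → insert u t ∈ K.faces := by
    intro t ht
    have : ∀ e : Finset ℕ, insert u e ∈ K.faces → t ⊆ e → insert u t ∈ K.faces :=
      fun e he hte => K.down_closed _ he _ (Finset.insert_subset_insert _ hte) (by simp)
    rw [hQ] at ht
    rcases triangle_sub ht with h | h | h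
    · exact this _ hab.2.2 h
    · exact this _ hbc.2.2 h
    · exact this _ hac.2.2 h
  have Qnot : Q ∉ K.faces := by
    intro hQK
    apply hnot
    refine ⟨Qne, uQ, hK.2.2.2.1 _ (by rw [Finset.card_insert_of_notMem uQ, Qcard]) ?_⟩
    intro t ht
    simp only [properFaces, Finset.mem_filter, Finset.mem_powerset] at ht
    obtain ⟨t1, t2, t3⟩ := ht
    rcases sub_insert_cases t1 uQ with h | ⟨t', h, rfl⟩
    · exact K.down_closed _ hQK _ h t2
    · refine Qsub t' (Finset.ssubset_iff_subset_ne.2 ⟨h, ?_⟩)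
      rintro rfl; exact t3 rfl
  have sum : ∀ e : Finset ℕ, e.card = 2 → u ∉ e → insert u e ∈ K.faces → ∃ A B, A ≠ B ∧
      (∀ T, (K.Tri u T ∧ e ⊆ T) ↔ T = A ∨ T = B) ∧
      cl0 A + cl0 B = if e ⊆ Q then 1 else 0 := by
    intro e hc hue he
    obtain ⟨A, B, hAB, hT⟩ := tri_two hK.1 hc hue he
    refine ⟨A, B, hAB, hT, ?_⟩
    rw [← hcl e hc]
    have : (K.lk {u}).faces.filter (fun t => t.card = 3 ∧ e ⊆ t) = {A, B} := by
      ext T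
      rw [Finset.mem_filter, mem_lk_vertex, Finset.mem_insert, Finset.mem_singleton, ← hT]
      unfold Tri
      constructor
      · rintro ⟨⟨x1, x2, x3⟩, x4, x5⟩; exact ⟨⟨x2, x4, x3⟩, x5⟩
      · rintro ⟨⟨x1, x2, x3⟩, x4⟩
        refine ⟨⟨?_, x1, x3⟩, x2, x4⟩
        rintro rfl; simp at x2
    rw [this, Finset.sum_pair hAB]
  have edge : ∀ {e T : Finset ℕ}, e ⊆ T → K.Tri u T → u ∉ e ∧ insert u e ∈ K.faces := by
    intro e T heT hT
    exact ⟨fun h => hT.1 (heT h), K.down_closed _ hT.2.2 _ (Finset.insert_subset_insert _ heT)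
      (by simp)⟩
  have fr : ∀ k, ∀ s ∈ K.faces, K.vertexSet.sup id + 1 + k ∉ s := by
    intro k s hs hk
    have := Finset.le_sup (f := id) (Ctx.sub_vertexSet hs hk)
    simp only [id] at this
    omega
  have ctx : Ctx K u Q (fun T => decide (cl0 T = 1))
      (fun i => K.vertexSet.sup id + 1 + (if i then 1 else 0)) :=
    { npm := hK.1
      hu := hu
      Qcard := Qcard
      uQ := uQ
      Qsub := Qsub
      Qnot := Qnot
      c1 := by
        intro e T₁ T₂ hc e1 e2 t1 t2 heQ
        obtain ⟨A, B, hAB, hT, hs⟩ := sum e hc (edge e1 t1).1 (edge e1 t1).2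
        rw [if_neg heQ] at hs
        have := zmod2_zero _ _ hs
        rcases (hT T₁).1 ⟨t1, e1⟩ with rfl | rfl <;> rcases (hT T₂).1 ⟨t2, e2⟩ with rfl | rfl
        · rfl
        · exact this
        · exact this.symm
        · rfl
      c2 := by
        intro e hc heQ i
        obtain ⟨A, B, hAB, hT, hs⟩ := sum e hc (fun h => uQ (heQ h)) (Qsub e
          (Finset.ssubset_iff_subset_ne.2 ⟨heQ, by rintro rfl; omega⟩))
        rw [if_pos heQ] at hs
        have hne := zmod2_one _ _ hs
        have aA := (hT A).2 (Or.inl rfl)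
        have aB := (hT B).2 (Or.inr rfl)
        by_cases hi : decide (cl0 A = 1) = i
        · exact ⟨A, aA.1, aA.2, hi⟩
        · refine ⟨B, aB.1, aB.2, ?_⟩
          show decide (cl0 B = 1) = i
          revert hne hi
          generalize decide (cl0 A = 1) = x
          generalize decide (cl0 B = 1) = y
          revert x y i; decide
      c3 := by
        intro e T₁ T₂ hc e1 e2 t1 t2 heQ hcl
        obtain ⟨A, B, hAB, hT, hs⟩ := sum e hc (edge e1 t1).1 (edge e1 t1).2
        rw [if_pos heQ] at hs
        have := zmod2_one _ _ hs
        rcases (hT T₁).1 ⟨t1, e1⟩ with rfl | rfl <;> rcases (hT T₂).1 ⟨t2, e2⟩ with rfl | rfl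
        · rfl
        · exact (this hcl).elim
        · exact (this hcl.symm).elim
        · rfl
      fresh := fun i s hs => fr _ s hs
      ninj := by simp }
  exact ctx.contra hK

end SComplex

namespace SComplex
/-- Lemma 3.3: in the class `R`, the link of a non-singular vertex contains every
missing triangle whose boundary it contains; consequently for every vertex `v` of
`lk(u)` the disc `lk(u) − st(v, lk(u))` contains no diagonal (an interior edge
joining two boundary vertices). -/
theorem statement4 (K : SComplex) (u : ℕ) (hK : InClassR K)
    (hu : ({u} : Finset ℕ) ∈ K.faces) (huns : K.HasSphereLink 3 u) :
    (∀ a b c : ℕ, a ≠ b → b ≠ c → a ≠ c →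
      ({a, b} : Finset ℕ) ∈ (K.lk {u}).faces →
      ({b, c} : Finset ℕ) ∈ (K.lk {u}).faces →
      ({a, c} : Finset ℕ) ∈ (K.lk {u}).faces →
      ({a, b, c} : Finset ℕ) ∈ (K.lk {u}).faces) ∧
    (∀ v x y : ℕ, ({v} : Finset ℕ) ∈ (K.lk {u}).faces → x ≠ y →
      ({x} : Finset ℕ) ∈ ((K.lk {u}).lk {v}).faces →
      ({y} : Finset ℕ) ∈ ((K.lk {u}).lk {v}).faces →
      ({x, y} : Finset ℕ) ∈ (K.lk {u}).faces →
      ({x, y} : Finset ℕ) ∈ ((K.lk {u}).lk {v}).faces) := by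
  have hone := part_one K u hK hu huns
  refine ⟨hone, ?_⟩
  intro v x y _ hxy hx hy hxy'
  rw [mem_lk_vertex] at hx hy ⊢
  have vx : v ≠ x := by simpa using hx.2.1
  have vy : v ≠ y := by simpa using hy.2.1
  refine ⟨by simp, ?_, hone v x y vx hxy vy hx.2.2 hxy' hy.2.2⟩
  simp only [Finset.mem_insert, Finset.mem_singleton, not_or]
  exact ⟨vx, vy⟩

end SComplex
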